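/- arXiv:1810.00809 — 4 statements merged into one kernel-verified Lean document; each statement's English description precedes it below -/
import Mathlib

section
/- Let X and Y be Hilbert spaces, let A : D(A) ⊆ Y → X be a densely defined closed linear operator whose adjoint A* : D(A*) ⊆ X → Y is densely defined, and let L : X → X be a bounded self-adjoint operator. Assume that X decomposes as a direct sum of closed subspaces X = X₋ ⊕ ker L ⊕ X₊ with dim X₋ < ∞ and dim ker L < ∞, such that (Lu, u) < 0 for all u ∈ X₋ ∖ {0}, and such that there exists δ > 0 with (Lu, u) ≥ δ‖u‖² for all u ∈ X₊. Then the operator B := A* L A, with domain D(B) = {y ∈ D(A) : L(Ay) ∈ D(A*)} ⊆ D(A), is self-adjoint on Y. -/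
open scoped RealInnerProductSpace

namespace LinearPMap

variable {X Y : Type*} [NormedAddCommGroup X] [InnerProductSpace ℝ X]
  [NormedAddCommGroup Y] [InnerProductSpace ℝ Y] [CompleteSpace Y]

/-- A symmetric operator some real shift of which is surjective is self-adjoint. -/
theorem adjoint_eq_self_of_surjective_add_smul {B : Y →ₗ.[ℝ] Y} (hB : B.IsFormalAdjoint B)
    {c : ℝ} (hsurj : ∀ f : Y, ∃ y : B.domain, B y + c • (y : Y) = f) : B.adjoint = B := by
  have hsymm (u w : B.domain) : ⟪B u + c • (u : Y), (w : Y)⟫ = ⟪(u : Y), B w + c • (w : Y)⟫ := by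
    rw [inner_add_left, inner_add_right, inner_smul_left, inner_smul_right, hB u w]
    rfl
  have hdense : Dense (B.domain : Set Y) := by
    rw [Submodule.dense_iff_topologicalClosure_eq_top,
      Submodule.topologicalClosure_eq_top_iff, Submodule.eq_bot_iff]
    intro f hf
    obtain ⟨y, rfl⟩ := hsurj f
    have hy : (y : Y) = 0 := ext_inner_right ℝ fun g ↦ by
      obtain ⟨w, rfl⟩ := hsurj g
      rw [← hsymm, inner_zero_left]
      exact (Submodule.mem_orthogonal' _ _).1 hf w w.2
    obtain rfl : y = 0 := Subtype.ext hy
    simp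
  refine (eq_of_le_of_domain_eq (hB.le_adjoint hdense)
    (le_antisymm (hB.le_adjoint hdense).1 fun v hv ↦ ?_)).symm
  obtain ⟨u, hu⟩ := hsurj (B.adjoint ⟨v, hv⟩ + c • v)
  have hvu : v = u := ext_inner_right ℝ fun g ↦ by
    obtain ⟨w, rfl⟩ := hsurj g
    rw [← hsymm, hu, inner_add_left, inner_add_right, inner_smul_left, inner_smul_right,
      adjoint_isFormalAdjoint hdense ⟨v, hv⟩ w]
    rfl
  exact hvu ▸ u.2

/-- If `A.adjoint` is densely defined, then every finite-rank operator is `A`-bounded with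
arbitrarily small bound on the image side. -/
theorem exists_norm_sq_le_of_finiteDimensional {A : Y →ₗ.[ℝ] X} [CompleteSpace X]
    (hA : Dense (A.domain : Set Y)) (hA' : Dense (A.adjoint.domain : Set X))
    {N : Type*} [NormedAddCommGroup N] [InnerProductSpace ℝ N] [FiniteDimensional ℝ N]
    (Q : X →L[ℝ] N) {ε : ℝ} (hε : 0 < ε) :
    ∃ C : ℝ, 0 ≤ C ∧ ∀ y : A.domain, ‖Q (A y)‖ ^ 2 ≤ ε * ‖A y‖ ^ 2 + C * ‖(y : Y)‖ ^ 2 := by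
  have single (q : X) {η : ℝ} (hη : 0 < η) : ∃ C : ℝ, 0 ≤ C ∧
      ∀ y : A.domain, ⟪q, A y⟫ ^ 2 ≤ η * ‖A y‖ ^ 2 + C * ‖(y : Y)‖ ^ 2 := by
    obtain ⟨e, he, hqe⟩ := hA'.exists_dist_lt q (show 0 < √(η / 2) by positivity)
    refine ⟨2 * ‖A.adjoint ⟨e, he⟩‖ ^ 2, by positivity, fun y ↦ ?_⟩
    have h₁ : ⟪q, A y⟫ = ⟪q - e, A y⟫ + ⟪A.adjoint ⟨e, he⟩, (y : Y)⟫ := by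
      rw [adjoint_isFormalAdjoint hA ⟨e, he⟩ y, inner_sub_left]
      ring
    have h₂ : ⟪q - e, A y⟫ ^ 2 ≤ η / 2 * ‖A y‖ ^ 2 := by
      rw [← Real.sq_sqrt (show 0 ≤ η / 2 by positivity), ← mul_pow, sq_le_sq,
        abs_of_nonneg (show 0 ≤ √(η / 2) * ‖A y‖ by positivity)]
      rw [dist_eq_norm] at hqe
      exact (abs_real_inner_le_norm _ _).trans (by gcongr)
    have h₃ : ⟪A.adjoint ⟨e, he⟩, (y : Y)⟫ ^ 2 ≤ (‖A.adjoint ⟨e, he⟩‖ * ‖(y : Y)‖) ^ 2 := by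
      rw [sq_le_sq]
      exact (abs_real_inner_le_norm _ _).trans (le_abs_self _)
    rw [h₁]
    nlinarith [sq_nonneg (⟪q - e, A y⟫ - ⟪A.adjoint ⟨e, he⟩, (y : Y)⟫)]
  let b := stdOrthonormalBasis ℝ N
  let n : ℝ := Module.finrank ℝ N
  have hn : n / (n + 1) ≤ 1 := div_le_one_of_le₀ (by linarith) (by positivity)
  choose C hC hCle using fun i ↦
    single (Q.adjoint (b i)) (show 0 < ε / (n + 1) by positivity)
  refine ⟨∑ i, C i, Finset.sum_nonneg fun i _ ↦ hC i, fun y ↦ ?_⟩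
  calc ‖Q (A y)‖ ^ 2 = ∑ i, ⟪Q.adjoint (b i), A y⟫ ^ 2 := by
        simp_rw [ContinuousLinearMap.adjoint_inner_left, b.sum_sq_inner_right]
    _ ≤ ∑ i, (ε / (n + 1) * ‖A y‖ ^ 2 + C i * ‖(y : Y)‖ ^ 2) :=
        Finset.sum_le_sum fun i _ ↦ hCle i y
    _ = n / (n + 1) * (ε * ‖A y‖ ^ 2) + (∑ i, C i) * ‖(y : Y)‖ ^ 2 := by
        rw [Finset.sum_add_distrib, Finset.sum_const, Finset.card_univ, Fintype.card_fin,
          nsmul_eq_mul, Finset.sum_mul]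
        change n * _ + _ = _
        ring
    _ ≤ ε * ‖A y‖ ^ 2 + (∑ i, C i) * ‖(y : Y)‖ ^ 2 :=
        add_le_add_left (mul_le_of_le_one_left (by positivity) hn) _

/-- The Lax-Milgram theorem for the form `⟪L (A y), A z⟫ + c * ⟪y, z⟫` on the domain of a closed
operator `A`. -/
theorem exists_inner_add_inner_eq_of_coercive [CompleteSpace X] {A : Y →ₗ.[ℝ] X}
    (hA : _root_.IsClosed (A.graph : Set (Y × X))) (L : X →L[ℝ] X) {c κ : ℝ} (hκ : 0 < κ)
    (hcoer : ∀ y : A.domain,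
      κ * (‖(y : Y)‖ ^ 2 + ‖A y‖ ^ 2) ≤ ⟪L (A y), A y⟫ + c * ‖(y : Y)‖ ^ 2) (f : Y) :
    ∃ y : A.domain, ∀ z : A.domain, ⟪L (A y), A z⟫ + c * ⟪(y : Y), (z : Y)⟫ = ⟪f, (z : Y)⟫ := by
  let G : Submodule ℝ (WithLp 2 (Y × X)) :=
    A.graph.comap (WithLp.linearEquiv 2 ℝ (Y × X)).toLinearMap
  have hG : _root_.IsClosed (G : Set (WithLp 2 (Y × X))) :=
    hA.preimage (WithLp.prod_continuous_ofLp 2 Y X)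
  have := hG.completeSpace_coe
  let P : G →L[ℝ] Y := (WithLp.fstL 2 ℝ Y X).comp G.subtypeL
  let R : G →L[ℝ] X := (WithLp.sndL 2 ℝ Y X).comp G.subtypeL
  let b : G →L[ℝ] G →L[ℝ] ℝ :=
    (innerSL ℝ).bilinearComp (L.comp R) R + c • (innerSL ℝ).bilinearComp P P
  have hb (u v : G) : b u v = ⟪L (R u), R v⟫ + c * ⟪P u, P v⟫ := rfl
  have hmem (u : G) : ∃ y : A.domain, (y : Y) = P u ∧ A y = R u :=
    (mem_graph_iff A).1 u.2
  have hbc : IsCoercive b := by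
    refine ⟨κ, hκ, fun u ↦ ?_⟩
    obtain ⟨y, hy, hAy⟩ := hmem u
    have hnorm : ‖u‖ ^ 2 = ‖P u‖ ^ 2 + ‖R u‖ ^ 2 :=
      WithLp.prod_norm_sq_eq_of_L2 (u : WithLp 2 (Y × X))
    rw [mul_assoc, ← sq, hnorm, hb, real_inner_self_eq_norm_sq, ← hy, ← hAy]
    exact hcoer y
  obtain ⟨u, hu⟩ := hbc.continuousLinearEquivOfBilin.surjective (P.adjoint f)
  obtain ⟨y, hy, hAy⟩ := hmem u
  refine ⟨y, fun z ↦ ?_⟩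
  let v : G := ⟨WithLp.toLp 2 ((z : Y), A z), A.mem_graph z⟩
  have h := hbc.continuousLinearEquivOfBilin_apply u v
  rw [hu, ContinuousLinearMap.adjoint_inner_left, hb, ← hy, ← hAy] at h
  exact h.symm

end LinearPMap

/-- A bounded operator whose quadratic form is coercive on a complement of `N` is coercive modulo
the projection onto `N`. -/
theorem ContinuousLinearMap.exists_le_inner_add_projectionOntoL
    {X : Type*} [NormedAddCommGroup X] [InnerProductSpace ℝ X] (L : X →L[ℝ] X)
    (hL : (L : X →ₗ[ℝ] X).IsSymmetric) {N P : Submodule ℝ X} (hNP : N.IsTopCompl P)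
    {δ : ℝ} (hδ : 0 < δ) (hpos : ∀ u ∈ P, δ * ‖u‖ ^ 2 ≤ ⟪L u, u⟫) :
    ∃ c : ℝ, 0 < c ∧ ∀ x : X,
      δ / 4 * ‖x‖ ^ 2 ≤ ⟪L x, x⟫ + c * ‖N.projectionOntoL P hNP x‖ ^ 2 := by
  refine ⟨δ / 2 + ‖L‖ + 2 * ‖L‖ ^ 2 / δ, by positivity, fun x ↦ ?_⟩
  obtain ⟨n, hn⟩ : ∃ n, N.projectionOntoL P hNP x = n := ⟨_, rfl⟩
  obtain ⟨p, hp⟩ : ∃ p, x - (n : X) = p := ⟨_, rfl⟩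
  have hpP : p ∈ P := by
    rw [← N.projectionOntoL_apply_eq_zero_iff hNP, ← hp, map_sub, hn,
      N.projectionOntoL_apply_left hNP, sub_self]
  obtain rfl : x = n + p := by rw [← hp]; abel
  rw [hn, Submodule.coe_norm]
  have hsymm : ⟪L n, p⟫ = ⟪L p, (n : X)⟫ := by
    rw [real_inner_comm]
    exact (hL p n).symm
  have hexp : ⟪L (n + p), (n : X) + p⟫ = ⟪L n, (n : X)⟫ + 2 * ⟪L n, p⟫ + ⟪L p, p⟫ := by
    rw [map_add, inner_add_left, inner_add_right, inner_add_right, ← hsymm]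
    ring
  have hbound (v : X) : -(‖L‖ * ‖(n : X)‖ * ‖v‖) ≤ ⟪L n, v⟫ :=
    neg_le_of_abs_le ((abs_real_inner_le_norm _ _).trans (by gcongr; exact L.le_opNorm _))
  have hyoung : 2 * (‖L‖ * ‖(n : X)‖ * ‖p‖)
      ≤ δ / 2 * ‖p‖ ^ 2 + 2 * ‖L‖ ^ 2 / δ * ‖(n : X)‖ ^ 2 := by
    have h : δ / 2 * ‖p‖ ^ 2 + 2 * ‖L‖ ^ 2 / δ * ‖(n : X)‖ ^ 2 - 2 * (‖L‖ * ‖(n : X)‖ * ‖p‖)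
        = (δ * ‖p‖ - 2 * ‖L‖ * ‖(n : X)‖) ^ 2 / (2 * δ) := by
      field_simp
      ring
    linarith [show 0 ≤ (δ * ‖p‖ - 2 * ‖L‖ * ‖(n : X)‖) ^ 2 / (2 * δ) by positivity]
  have hpar : ‖(n : X) + p‖ ^ 2 ≤ 2 * ‖(n : X)‖ ^ 2 + 2 * ‖p‖ ^ 2 := by
    linarith [parallelogram_law_with_norm ℝ (n : X) p, mul_self_nonneg ‖(n : X) - p‖,
      sq ‖(n : X) + p‖, sq ‖(n : X)‖, sq ‖p‖]
  rw [hexp]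
  linarith [hbound n, hbound p, hpos p hpP, mul_le_mul_of_nonneg_left hpar hδ.le,
    sq ‖(n : X)‖, mul_assoc ‖L‖ ‖(n : X)‖ ‖(n : X)‖, congrArg (‖L‖ * ·) (sq ‖(n : X)‖)]

/-- Let `A : D(A) ⊆ Y → X` be densely defined and closed with densely defined
adjoint, and let `L : X → X` be bounded self-adjoint admitting a direct sum decomposition
`X = X₋ ⊕ ker L ⊕ X₊` into closed subspaces with `dim X₋ < ∞`, `dim ker L < ∞`, the quadratic
form of `L` negative definite on `X₋` and coercive on `X₊`. Then `B := A* L A`, with domain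
`{y ∈ D(A) : L(Ay) ∈ D(A*)}`, is self-adjoint on `Y`. -/
theorem stmt2
    {X Y : Type*} [NormedAddCommGroup X] [InnerProductSpace ℝ X] [CompleteSpace X]
    [NormedAddCommGroup Y] [InnerProductSpace ℝ Y] [CompleteSpace Y]
    (A : Y →ₗ.[ℝ] X) (hAdense : Dense (A.domain : Set Y))
    (hAclosed : IsClosed (A.graph : Set (Y × X)))
    (hAadjdense : Dense (A.adjoint.domain : Set X))
    (L : X →L[ℝ] X) (hL : IsSelfAdjoint L)
    (Xm Xp : Submodule ℝ X)
    (hXmclosed : IsClosed (Xm : Set X)) (hXpclosed : IsClosed (Xp : Set X))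
    (hXmfin : FiniteDimensional ℝ Xm)
    (hkerfin : FiniteDimensional ℝ (LinearMap.ker (L : X →ₗ[ℝ] X)))
    (hdecomp : DirectSum.IsInternal
      (![Xm, LinearMap.ker (L : X →ₗ[ℝ] X), Xp] : Fin 3 → Submodule ℝ X))
    (hneg : ∀ u ∈ Xm, u ≠ 0 → ⟪L u, u⟫ < 0)
    (δ : ℝ) (hδ : 0 < δ)
    (hpos : ∀ u ∈ Xp, δ * ‖u‖ ^ 2 ≤ ⟪L u, u⟫)
    (B : Y →ₗ.[ℝ] Y)
    (hBdom : ∀ y : Y,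
      y ∈ B.domain ↔ ∃ hy : y ∈ A.domain, L (A ⟨y, hy⟩) ∈ A.adjoint.domain)
    (hBval : ∀ (y : B.domain) (hy : (y : Y) ∈ A.domain)
      (hy2 : L (A ⟨(y : Y), hy⟩) ∈ A.adjoint.domain),
      B y = A.adjoint ⟨L (A ⟨(y : Y), hy⟩), hy2⟩) :
    B.adjoint = B := by
  have hLsymm : (L : X →ₗ[ℝ] X).IsSymmetric := hL.isSymmetric
  let N := Xm ⊔ LinearMap.ker (L : X →ₗ[ℝ] X)
  have hcompl : IsCompl N Xp := by
    refine ⟨?_, codisjoint_iff.2 ?_⟩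
    · refine ((hdecomp.submodule_iSupIndep 2).mono_right ?_).symm
      exact sup_le (le_iSup₂_of_le (0 : Fin 3) (by decide) le_rfl)
        (le_iSup₂_of_le (1 : Fin 3) (by decide) le_rfl)
    · rw [eq_top_iff, ← hdecomp.submodule_iSup_eq_top]
      refine iSup_le fun i ↦ ?_
      fin_cases i
      · exact le_sup_left.trans le_sup_left
      · exact le_sup_right.trans le_sup_left
      · exact le_sup_right
  have hNXp : N.IsTopCompl Xp :=
    Submodule.IsCompl.isTopCompl_of_isClosed hcompl N.closed_of_finiteDimensional hXpclosed
  obtain ⟨c, hc, hcle⟩ := L.exists_le_inner_add_projectionOntoL hLsymm hNXp hδ hpos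
  obtain ⟨C, -, hCle⟩ := LinearPMap.exists_norm_sq_le_of_finiteDimensional hAdense hAadjdense
    (N.projectionOntoL Xp hNXp) (show 0 < δ / (8 * c) by positivity)
  have hcoer (y : A.domain) : δ / 8 * (‖(y : Y)‖ ^ 2 + ‖A y‖ ^ 2)
      ≤ ⟪L (A y), A y⟫ + (c * C + δ / 8) * ‖(y : Y)‖ ^ 2 := by
    have h₁ := hcle (A y)
    have h₂ := mul_le_mul_of_nonneg_left (hCle y) hc.le
    have h₃ : c * (δ / (8 * c) * ‖A y‖ ^ 2 + C * ‖(y : Y)‖ ^ 2)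
        = δ / 8 * ‖A y‖ ^ 2 + c * C * ‖(y : Y)‖ ^ 2 := by
      field_simp
    linarith
  have hBinner (u : B.domain) (hu : (u : Y) ∈ A.domain) (z : A.domain) :
      ⟪B u, (z : Y)⟫ = ⟪L (A ⟨u, hu⟩), A z⟫ := by
    obtain ⟨_, hLu⟩ := (hBdom u).1 u.2
    rw [hBval u hu hLu]
    exact LinearPMap.adjoint_isFormalAdjoint hAdense ⟨_, hLu⟩ z
  refine LinearPMap.adjoint_eq_self_of_surjective_add_smul (c := c * C + δ / 8)
    (fun u w ↦ ?_) fun f ↦ ?_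
  · obtain ⟨hu, -⟩ := (hBdom u).1 u.2
    obtain ⟨hw, -⟩ := (hBdom w).1 w.2
    exact (hBinner u hu ⟨w, hw⟩).trans (((hLsymm _ _).trans (real_inner_comm _ _)).trans
      ((hBinner w hw ⟨u, hu⟩).symm.trans (real_inner_comm _ _)))
  · obtain ⟨y, hy⟩ := LinearPMap.exists_inner_add_inner_eq_of_coercive hAclosed L
      (show 0 < δ / 8 by positivity) hcoer f
    have hyB : (y : Y) ∈ B.domain := by
      refine (hBdom y).2 ⟨y.2, LinearPMap.mem_adjoint_domain_of_exists _
        ⟨f - (c * C + δ / 8) • (y : Y), fun z ↦ ?_⟩⟩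
      rw [inner_sub_left, real_inner_smul_left, ← hy z]
      exact add_sub_cancel_right _ _
    refine ⟨⟨y, hyB⟩, hAdense.eq_of_inner_left ℝ fun z hz ↦ ?_⟩
    rw [inner_add_left, real_inner_smul_left, hBinner ⟨y, hyB⟩ y.2 ⟨z, hz⟩]
    exact hy ⟨z, hz⟩
end

section
/- Let μ ∈ C²(ℝ³) be spherically symmetric, μ(x) = u(|x|), with u′(r) > 0 for all r > 0. Define E(x,v) := e^{μ(x)} √(1+|v|²) for (x,v) ∈ ℝ³ × ℝ³, fix E⁰ > e^{μ(0)}, and assume that the set D := {(x,v) : E(x,v) < E⁰} is bounded. Let χ : (e^{μ(0)}, E⁰) → (0,∞) be continuous and let g, h be C¹ functions on D. If the functions {g,E} h χ(E) and {h,E} g χ(E) are Lebesgue integrable over D, then ∫∫_D {g,E} h χ(E) dv dx = − ∫∫_D {h,E} g χ(E) dv dx. In particular, this integration-by-parts formula holds without any boundary conditions on g, h, or the weight χ. -/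
open MeasureTheory
open scoped RealInnerProductSpace

noncomputable section

/-- Gradient in the `x` (position) variable of a function on phase space `ℝ³ × ℝ³`. -/
def gradX (f : EuclideanSpace ℝ (Fin 3) × EuclideanSpace ℝ (Fin 3) → ℝ)
    (p : EuclideanSpace ℝ (Fin 3) × EuclideanSpace ℝ (Fin 3)) : EuclideanSpace ℝ (Fin 3) :=
  gradient (fun x => f (x, p.2)) p.1

/-- Gradient in the `v` (momentum) variable of a function on phase space `ℝ³ × ℝ³`. -/
def gradV (f : EuclideanSpace ℝ (Fin 3) × EuclideanSpace ℝ (Fin 3) → ℝ)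
    (p : EuclideanSpace ℝ (Fin 3) × EuclideanSpace ℝ (Fin 3)) : EuclideanSpace ℝ (Fin 3) :=
  gradient (fun v => f (p.1, v)) p.2

/-- The Poisson bracket `{f, g} = ∇ₓf · ∇ᵥg − ∇ᵥf · ∇ₓg` on phase space `ℝ³ × ℝ³`. -/
def poissonBracket (f g : EuclideanSpace ℝ (Fin 3) × EuclideanSpace ℝ (Fin 3) → ℝ)
    (p : EuclideanSpace ℝ (Fin 3) × EuclideanSpace ℝ (Fin 3)) : ℝ :=
  ⟪gradX f p, gradV g p⟫ - ⟪gradV f p, gradX g p⟫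

local notation "V" => EuclideanSpace ℝ (Fin 3)

lemma gradX_apply {f : V × V → ℝ} {p : V × V} (hf : DifferentiableAt ℝ f p) (i : Fin 3) :
    gradX f p i = fderiv ℝ f p (EuclideanSpace.single i 1, 0) := by
  have h1 : HasFDerivAt (fun x : V => f (x, p.2))
      ((fderiv ℝ f p).comp (ContinuousLinearMap.inl ℝ V V)) p.1 :=
    HasFDerivAt.comp (f := fun x : V => (x, p.2)) p.1 hf.hasFDerivAt
      (hasFDerivAt_prodMk_left p.1 p.2)
  have h2 := inner_gradient_left (𝕜 := ℝ) (f := fun x : V => f (x, p.2)) (x := p.1)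
    (y := EuclideanSpace.single i 1)
  rw [h1.fderiv] at h2
  rw [EuclideanSpace.inner_single_right] at h2
  simpa [gradX, -inner_gradient_left] using h2

lemma gradV_apply {f : V × V → ℝ} {p : V × V} (hf : DifferentiableAt ℝ f p) (i : Fin 3) :
    gradV f p i = fderiv ℝ f p (0, EuclideanSpace.single i 1) := by
  have h1 : HasFDerivAt (fun v : V => f (p.1, v))
      ((fderiv ℝ f p).comp (ContinuousLinearMap.inr ℝ V V)) p.2 :=
    HasFDerivAt.comp (f := fun v : V => (p.1, v)) p.2 hf.hasFDerivAt
      (hasFDerivAt_prodMk_right p.1 p.2)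
  have h2 := inner_gradient_left (𝕜 := ℝ) (f := fun v : V => f (p.1, v)) (x := p.2)
    (y := EuclideanSpace.single i 1)
  rw [h1.fderiv] at h2
  rw [EuclideanSpace.inner_single_right] at h2
  simpa [gradV, -inner_gradient_left] using h2

lemma poissonBracket_eq_sum {f g : V × V → ℝ} {p : V × V}
    (hf : DifferentiableAt ℝ f p) (hg : DifferentiableAt ℝ g p) :
    poissonBracket f g p = ∑ i : Fin 3,
      (fderiv ℝ f p (EuclideanSpace.single i 1, 0) * fderiv ℝ g p (0, EuclideanSpace.single i 1)
        - fderiv ℝ f p (0, EuclideanSpace.single i 1)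
          * fderiv ℝ g p (EuclideanSpace.single i 1, 0)) := by
  simp only [poissonBracket, PiLp.inner_apply, gradX_apply hf, gradV_apply hf, gradX_apply hg,
    gradV_apply hg, ← Finset.sum_sub_distrib, RCLike.inner_apply, conj_trivial]
  exact Finset.sum_congr rfl fun i _ => by ring

lemma poissonBracket_mul_left {f₁ f₂ g : V × V → ℝ} {p : V × V} (h₁ : DifferentiableAt ℝ f₁ p)
    (h₂ : DifferentiableAt ℝ f₂ p) (hg : DifferentiableAt ℝ g p) :
    poissonBracket (fun q => f₁ q * f₂ q) g p =
      poissonBracket f₁ g p * f₂ p + poissonBracket f₂ g p * f₁ p := by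
  rw [poissonBracket_eq_sum (h₁.fun_mul h₂) hg, poissonBracket_eq_sum h₁ hg,
    poissonBracket_eq_sum h₂ hg, fderiv_fun_mul h₁ h₂, Finset.sum_mul, Finset.sum_mul,
    ← Finset.sum_add_distrib]
  refine Finset.sum_congr rfl fun i _ => ?_
  simp only [add_apply, FunLike.coe_smul, Pi.smul_apply, smul_eq_mul]
  ring

lemma poissonBracket_comp_self {g : V × V → ℝ} {ψ : ℝ → ℝ} {p : V × V}
    (hψ : DifferentiableAt ℝ ψ (g p)) (hg : DifferentiableAt ℝ g p) :
    poissonBracket (fun q => ψ (g q)) g p = 0 := by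
  have h : HasFDerivAt (fun q => ψ (g q)) (deriv ψ (g p) • fderiv ℝ g p) p :=
    hψ.hasDerivAt.comp_hasFDerivAt p hg.hasFDerivAt
  rw [poissonBracket_eq_sum h.differentiableAt hg, h.fderiv]
  refine Finset.sum_eq_zero fun i _ => ?_
  simp only [FunLike.coe_smul, Pi.smul_apply, smul_eq_mul]
  ring

lemma continuousOn_poissonBracket {f g : V × V → ℝ} {D : Set (V × V)} (hD : IsOpen D)
    (hf : ContDiffOn ℝ 1 f D) (hg : ContDiffOn ℝ 1 g D) :
    ContinuousOn (poissonBracket f g) D := by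
  have hf' := hf.continuousOn_fderiv_of_isOpen hD le_rfl
  have hg' := hg.continuousOn_fderiv_of_isOpen hD le_rfl
  refine ContinuousOn.congr (f := fun p => ∑ i : Fin 3,
      (fderiv ℝ f p (EuclideanSpace.single i 1, 0) * fderiv ℝ g p (0, EuclideanSpace.single i 1)
        - fderiv ℝ f p (0, EuclideanSpace.single i 1)
          * fderiv ℝ g p (EuclideanSpace.single i 1, 0))) (by fun_prop) fun p hp => ?_
  exact poissonBracket_eq_sum ((hf.differentiableOn one_ne_zero).differentiableAt (hD.mem_nhds hp))
    ((hg.differentiableOn one_ne_zero).differentiableAt (hD.mem_nhds hp))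

/-- A mixed second-order integration by parts for a compactly supported function. -/
lemma integral_fderiv_mul_fderiv_comm {W : Type*} [NormedAddCommGroup W] [NormedSpace ℝ W]
    [FiniteDimensional ℝ W] [MeasurableSpace W] [BorelSpace W] (ν : Measure W)
    [ν.IsAddHaarMeasure] {F E : W → ℝ} (hF : ContDiff ℝ 1 F) (hFc : HasCompactSupport F)
    (hE : ContDiff ℝ 2 E) (a b : W) :
    Integrable (fun p => fderiv ℝ F p a * fderiv ℝ E p b) ν ∧
      ∫ p, fderiv ℝ F p a * fderiv ℝ E p b ∂ν = ∫ p, fderiv ℝ F p b * fderiv ℝ E p a ∂ν := by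
  have hE1 : ContDiff ℝ 1 (fderiv ℝ E) := hE.fderiv_right (by norm_num)
  have hEd : ∀ c, ContDiff ℝ 1 fun p => fderiv ℝ E p c := fun c => hE1.clm_apply contDiff_const
  have hF1 : ∀ c, Continuous fun p => fderiv ℝ F p c := fun c =>
    (hF.continuous_fderiv one_ne_zero).clm_apply continuous_const
  have hsupp : ∀ c, HasCompactSupport fun p => fderiv ℝ F p c := fun c =>
    hFc.fderiv_apply ℝ c
  have hint : ∀ c d, Integrable (fun p => fderiv ℝ F p c * fderiv ℝ E p d) ν := fun c d =>
    ((hF1 c).mul (hEd d).continuous).integrable_of_hasCompactSupport (hsupp c).mul_right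
  have hint' : ∀ c d, Integrable (fun p => F p * fderiv ℝ (fun q => fderiv ℝ E q d) p c) ν :=
    fun c d => (hF.continuous.mul (((hEd d).continuous_fderiv one_ne_zero).clm_apply
      continuous_const)).integrable_of_hasCompactSupport hFc.mul_right
  have hint'' : ∀ d, Integrable (fun p => F p * fderiv ℝ E p d) ν := fun d =>
    (hF.continuous.mul (hEd d).continuous).integrable_of_hasCompactSupport hFc.mul_right
  have key : ∀ c d, ∫ p, F p * fderiv ℝ (fun q => fderiv ℝ E q d) p c ∂ν =
      - ∫ p, fderiv ℝ F p c * fderiv ℝ E p d ∂ν := fun c d =>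
    integral_mul_fderiv_eq_neg_fderiv_mul_of_integrable (hint c d) (hint' c d) (hint'' d)
      (fun x _ => hF.differentiable one_ne_zero x)
      (fun x _ => (hEd d).differentiable one_ne_zero x)
  have hsymm : ∀ p, fderiv ℝ (fun q => fderiv ℝ E q b) p a =
      fderiv ℝ (fun q => fderiv ℝ E q a) p b := by
    intro p
    have hd : DifferentiableAt ℝ (fderiv ℝ E) p := hE1.differentiable one_ne_zero p
    have hs : IsSymmSndFDerivAt ℝ E p := hE.contDiffAt.isSymmSndFDerivAt (by simp)
    rw [fderiv_clm_apply hd (differentiableAt_const _),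
      fderiv_clm_apply hd (differentiableAt_const _)]
    simpa using hs a b
  refine ⟨hint a b, ?_⟩
  have h1 := key a b
  simp only [hsymm] at h1
  linarith [key b a]

lemma integral_poissonBracket_eq_zero {F E : V × V → ℝ} (hF : ContDiff ℝ 1 F)
    (hFc : HasCompactSupport F) (hE : ContDiff ℝ 2 E) :
    ∫ p, poissonBracket F E p = 0 := by
  have : (volume : Measure (V × V)).IsAddHaarMeasure :=
    inferInstanceAs ((volume : Measure V).prod (volume : Measure V)).IsAddHaarMeasure
  have h := integral_fderiv_mul_fderiv_comm (volume : Measure (V × V)) hF hFc hE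
  simp only [poissonBracket_eq_sum (hF.differentiable one_ne_zero _)
    (hE.differentiable two_ne_zero _)]
  rw [integral_finsetSum _ fun i _ => by exact (h _ _).1.sub (h _ _).1]
  refine Finset.sum_eq_zero fun i _ => ?_
  rw [integral_sub (h _ _).1 (h _ _).1, (h _ _).2, sub_self]

section Sublevel

variable {E f : V × V → ℝ} {E0 b : ℝ} {ψ : ℝ → ℝ}

lemma isCompact_setOf_le_of_isBounded (hE : Continuous E)
    (hbdd : Bornology.IsBounded {p | E p < E0}) (hb : b < E0) : IsCompact {p | E p ≤ b} :=
  Metric.isCompact_of_isClosed_isBounded (isClosed_le hE continuous_const)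
    (hbdd.subset fun _ hp => lt_of_le_of_lt hp hb)

lemma setIntegral_poissonBracket_mul_comp_eq_zero_of_contDiff (hE : ContDiff ℝ 2 E)
    (hbdd : Bornology.IsBounded {p | E p < E0}) (hf : ContDiffOn ℝ 1 f {p | E p < E0})
    (hb : b < E0) (hψ : ContDiff ℝ 1 ψ) (hψb : ∀ s, b < s → ψ s = 0) :
    ∫ p in {p | E p < E0}, poissonBracket f E p * ψ (E p) = 0 := by
  have hopen : IsOpen {p | E p < E0} := isOpen_lt hE.continuous continuous_const
  have hK := isCompact_setOf_le_of_isBounded hE.continuous hbdd hb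
  have hzero : ∀ p, p ∉ {p | E p ≤ b} → f p * ψ (E p) = 0 := fun p hp => by
    rw [hψb _ (not_le.1 hp), mul_zero]
  have hψE : ContDiff ℝ 1 fun p => ψ (E p) := hψ.comp (hE.of_le one_le_two)
  have hF : ContDiff ℝ 1 fun p => f p * ψ (E p) := by
    rw [contDiff_iff_contDiffAt]
    intro p
    by_cases hp : E p < E0
    · exact (hf.contDiffAt (hopen.mem_nhds hp)).mul hψE.contDiffAt
    · refine (contDiffAt_const (c := (0 : ℝ))).congr_of_eventuallyEq ?_
      filter_upwards [hK.isClosed.isOpen_compl.mem_nhds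
        (fun hp' => hp (lt_of_le_of_lt hp' hb) : p ∈ {p | E p ≤ b}ᶜ)] with q hq
      exact hzero q hq
  have hFc : HasCompactSupport fun p => f p * ψ (E p) := HasCompactSupport.intro hK hzero
  rw [← integral_poissonBracket_eq_zero hF hFc hE, ← setIntegral_eq_integral_of_forall_compl_eq_zero
    (s := {p | E p < E0}) (f := poissonBracket (fun p => f p * ψ (E p)) E)]
  · refine setIntegral_congr_fun hopen.measurableSet fun p hp => ?_
    have hEp := hE.differentiable two_ne_zero p
    rw [poissonBracket_mul_left ((hf.differentiableOn one_ne_zero).differentiableAt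
      (hopen.mem_nhds hp)) (hψE.differentiable one_ne_zero p) hEp, poissonBracket_comp_self
      (hψ.differentiable one_ne_zero _) hEp, zero_mul, add_zero]
  · intro p hp
    have hev : (fun p => f p * ψ (E p)) =ᶠ[nhds p] fun _ => 0 := by
      filter_upwards [hK.isClosed.isOpen_compl.mem_nhds
        (fun hp' => hp (lt_of_le_of_lt hp' hb) : p ∈ {p | E p ≤ b}ᶜ)] with q hq
      exact hzero q hq
    rw [poissonBracket_eq_sum (hF.differentiable one_ne_zero p) (hE.differentiable two_ne_zero p),
      hev.fderiv_eq]
    simp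

/-- Forward averages of a continuous function are `C¹` and converge to it pointwise. -/
lemma exists_contDiff_tendsto_of_continuous (hψ : Continuous ψ) {C : ℝ} (hC : ∀ s, |ψ s| ≤ C)
    (hψb : ∀ s, b < s → ψ s = 0) :
    ∃ Φ : ℕ → ℝ → ℝ, (∀ n, ContDiff ℝ 1 (Φ n)) ∧ (∀ n s, |Φ n s| ≤ C) ∧
      (∀ n s, b < s → Φ n s = 0) ∧
      ∀ s, Filter.Tendsto (fun n => Φ n s) Filter.atTop (nhds (ψ s)) := by
  have hprim : ∀ s, HasDerivAt (fun t => ∫ x in (0 : ℝ)..t, ψ x) (ψ s) s := fun s =>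
    intervalIntegral.integral_hasDerivAt_right (hψ.intervalIntegrable _ _)
      (hψ.stronglyMeasurableAtFilter _ _) hψ.continuousAt
  set P : ℝ → ℝ := fun t => ∫ x in (0 : ℝ)..t, ψ x
  have hPc : ContDiff ℝ 1 P := by
    rw [contDiff_one_iff_deriv]
    refine ⟨fun s => (hprim s).differentiableAt, ?_⟩
    rwa [show deriv P = ψ from funext fun s => (hprim s).deriv]
  have hsub : ∀ s t, P t - P s = ∫ x in s..t, ψ x := fun s t =>
    intervalIntegral.integral_interval_sub_left (hψ.intervalIntegrable _ _)
      (hψ.intervalIntegrable _ _)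
  have hpos : ∀ n : ℕ, (0 : ℝ) < 1 / ((n : ℝ) + 1) := fun n => Nat.one_div_pos_of_nat
  refine ⟨fun n s => (1 / ((n : ℝ) + 1))⁻¹ * (P (s + 1 / ((n : ℝ) + 1)) - P s), fun n => ?_,
    fun n s => ?_, fun n s hs => ?_, fun s => ?_⟩
  · exact contDiff_const.mul ((hPc.comp (contDiff_id.add contDiff_const)).sub hPc)
  · have h := intervalIntegral.norm_integral_le_of_norm_le_const (f := ψ) (a := s)
      (b := s + 1 / ((n : ℝ) + 1)) (C := C) fun x _ => hC x
    rw [Real.norm_eq_abs, add_sub_cancel_left, abs_of_pos (hpos n)] at h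
    beta_reduce
    rw [hsub, abs_mul, abs_of_pos (inv_pos.2 (hpos n)), inv_mul_le_iff₀ (hpos n)]
    linarith
  · have h : ∫ x in s..s + 1 / ((n : ℝ) + 1), ψ x = 0 := by
      rw [intervalIntegral.integral_of_le (by linarith [hpos n])]
      exact setIntegral_eq_zero_of_forall_eq_zero fun x hx => hψb x (hs.trans hx.1)
    simp only [hsub, h, mul_zero]
  · have h := (hprim s).tendsto_slope_zero_right
    refine h.comp (tendsto_nhdsWithin_iff.2
      ⟨tendsto_one_div_add_atTop_nhds_zero_nat, Filter.Eventually.of_forall hpos⟩)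

lemma setIntegral_poissonBracket_mul_comp_eq_zero_of_continuous (hE : ContDiff ℝ 2 E)
    (hbdd : Bornology.IsBounded {p | E p < E0}) (hf : ContDiffOn ℝ 1 f {p | E p < E0})
    (hb : b < E0) (hψ : Continuous ψ) {C : ℝ} (hC : ∀ s, |ψ s| ≤ C)
    (hψb : ∀ s, b < s → ψ s = 0) :
    ∫ p in {p | E p < E0}, poissonBracket f E p * ψ (E p) = 0 := by
  obtain ⟨Φ, hΦc, hΦC, hΦb, hΦlim⟩ := exists_contDiff_tendsto_of_continuous hψ hC hψb
  have hopen : IsOpen {p | E p < E0} := isOpen_lt hE.continuous continuous_const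
  have hK := isCompact_setOf_le_of_isBounded hE.continuous hbdd hb
  have hKD : {p | E p ≤ b} ⊆ {p | E p < E0} := fun p hp => lt_of_le_of_lt hp hb
  have hcont : ContinuousOn (poissonBracket f E) {p | E p < E0} :=
    continuousOn_poissonBracket hopen hf (hE.of_le one_le_two).contDiffOn
  have hlim := tendsto_integral_of_dominated_convergence
    (μ := volume.restrict {p | E p < E0})
    (F := fun n p => poissonBracket f E p * Φ n (E p))
    (f := fun p => poissonBracket f E p * ψ (E p))
    ({p | E p ≤ b}.indicator fun p => |poissonBracket f E p| * C) (fun n => ?_) ?_ (fun n => ?_) ?_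
  · simp only [setIntegral_poissonBracket_mul_comp_eq_zero_of_contDiff hE hbdd hf hb (hΦc _)
      (hΦb _)] at hlim
    exact tendsto_nhds_unique hlim tendsto_const_nhds
  · exact (hcont.mul ((hΦc n).continuous.comp hE.continuous).continuousOn).aestronglyMeasurable
      hopen.measurableSet
  · have h : IntegrableOn (fun p => |poissonBracket f E p| * C) {p | E p ≤ b} :=
      ((hcont.mono hKD).abs.mul continuousOn_const).integrableOn_compact hK
    exact (h.integrable_indicator hK.measurableSet).integrableOn
  · refine Filter.Eventually.of_forall fun p => ?_
    by_cases hp : E p ≤ b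
    · rw [Set.indicator_of_mem (show p ∈ {p | E p ≤ b} from hp), Real.norm_eq_abs, abs_mul]
      exact mul_le_mul_of_nonneg_left (hΦC n _) (abs_nonneg _)
    · rw [Set.indicator_of_notMem (show p ∉ {p | E p ≤ b} from hp), hΦb n _ (not_le.1 hp), mul_zero, norm_zero]
  · exact Filter.Eventually.of_forall fun p => (hΦlim (E p)).const_mul _

/-- A trapezoidal cutoff: it vanishes within `1 / (n + 1)` of the complement of `(a, b)` and
tends to `1` inside. -/
def trapezoidCutoff (a b : ℝ) (n : ℕ) (s : ℝ) : ℝ :=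
  max 0 (min 1 (((n : ℝ) + 1) * min (s - a) (b - s) - 1))

lemma continuous_trapezoidCutoff (a b : ℝ) (n : ℕ) : Continuous (trapezoidCutoff a b n) := by
  unfold trapezoidCutoff
  fun_prop

lemma trapezoidCutoff_nonneg (a b : ℝ) (n : ℕ) (s : ℝ) : 0 ≤ trapezoidCutoff a b n s :=
  le_max_left _ _

lemma trapezoidCutoff_le_one (a b : ℝ) (n : ℕ) (s : ℝ) : trapezoidCutoff a b n s ≤ 1 :=
  max_le zero_le_one (min_le_left _ _)

lemma trapezoidCutoff_eq_zero {a b : ℝ} {n : ℕ} {s : ℝ}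
    (hs : s ∉ Set.Icc (a + 1 / ((n : ℝ) + 1)) (b - 1 / ((n : ℝ) + 1))) :
    trapezoidCutoff a b n s = 0 := by
  have hn : (0 : ℝ) < (n : ℝ) + 1 := by positivity
  refine max_eq_left (min_le_of_right_le ?_)
  have h : min (s - a) (b - s) ≤ 1 / ((n : ℝ) + 1) := by
    by_contra! h
    exact hs ⟨by linarith [(lt_min_iff.1 h).1], by linarith [(lt_min_iff.1 h).2]⟩
  rw [le_div_iff₀ hn] at h
  linarith

lemma tendsto_trapezoidCutoff {a b s : ℝ} (hs : s ∈ Set.Ioo a b) :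
    Filter.Tendsto (fun n => trapezoidCutoff a b n s) Filter.atTop (nhds 1) := by
  have hm : 0 < min (s - a) (b - s) := lt_min (sub_pos.2 hs.1) (sub_pos.2 hs.2)
  obtain ⟨N, hN⟩ := exists_nat_gt (2 / min (s - a) (b - s))
  refine tendsto_const_nhds.congr' ?_
  filter_upwards [Filter.eventually_ge_atTop N] with n hn
  have hn' : (N : ℝ) ≤ n := Nat.cast_le.2 hn
  have h : 2 ≤ ((n : ℝ) + 1) * min (s - a) (b - s) := by
    rw [← div_le_iff₀ hm]
    linarith
  rw [trapezoidCutoff, min_eq_left (by linarith), max_eq_right zero_le_one]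

/-- Integrals of `{f, E} χ(E)` over a bounded sublevel set of `E` vanish, whatever the behaviour of
the weight at the minimal and the maximal energy. -/
lemma setIntegral_poissonBracket_mul_comp_eq_zero {a : ℝ} {χ : ℝ → ℝ} (hE : ContDiff ℝ 2 E)
    (ha : ∀ p, a ≤ E p) (hbdd : Bornology.IsBounded {p | E p < E0})
    (hf : ContDiffOn ℝ 1 f {p | E p < E0}) (hχ : ContinuousOn χ (Set.Ioo a E0))
    (hint : IntegrableOn (fun p => poissonBracket f E p * χ (E p)) {p | E p < E0}) :
    ∫ p in {p | E p < E0}, poissonBracket f E p * χ (E p) = 0 := by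
  have hopen : IsOpen {p | E p < E0} := isOpen_lt hE.continuous continuous_const
  have hpos : ∀ n : ℕ, (0 : ℝ) < 1 / ((n : ℝ) + 1) := fun n => Nat.one_div_pos_of_nat
  have hcut : ∀ n, Continuous (fun s => χ s * trapezoidCutoff a E0 n s) ∧
      HasCompactSupport (fun s => χ s * trapezoidCutoff a E0 n s) := by
    intro n
    have hzero : ∀ s, s ∉ Set.Icc (a + 1 / ((n : ℝ) + 1)) (E0 - 1 / ((n : ℝ) + 1)) →
        χ s * trapezoidCutoff a E0 n s = 0 := fun s hs => by
      rw [trapezoidCutoff_eq_zero hs, mul_zero]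
    have htsupp : tsupport (fun s => χ s * trapezoidCutoff a E0 n s) ⊆ Set.Ioo a E0 :=
      (closure_minimal (fun s hs => not_imp_comm.1 (hzero s) hs) isClosed_Icc).trans
        (Set.Icc_subset_Ioo (lt_add_of_pos_right a (hpos n)) (sub_lt_self E0 (hpos n)))
    exact ⟨(hχ.mul (continuous_trapezoidCutoff a E0 n).continuousOn).continuous_of_tsupport_subset
      isOpen_Ioo htsupp, HasCompactSupport.intro isCompact_Icc hzero⟩
  have hterm : ∀ n, ∫ p in {p | E p < E0},
      poissonBracket f E p * (χ (E p) * trapezoidCutoff a E0 n (E p)) = 0 := by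
    intro n
    obtain ⟨C, hC⟩ := (hcut n).1.bounded_above_of_compact_support (hcut n).2
    refine setIntegral_poissonBracket_mul_comp_eq_zero_of_continuous (b := E0 - 1 / ((n : ℝ) + 1))
      (ψ := fun s => χ s * trapezoidCutoff a E0 n s) hE hbdd hf (by linarith [hpos n]) (hcut n).1
      hC fun s hs => ?_
    rw [trapezoidCutoff_eq_zero fun hs' => absurd hs'.2 (not_le.2 hs), mul_zero]
  have hlim := tendsto_integral_of_dominated_convergence
    (μ := volume.restrict {p | E p < E0})
    (F := fun n p => poissonBracket f E p * (χ (E p) * trapezoidCutoff a E0 n (E p)))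
    (f := fun p => poissonBracket f E p * χ (E p))
    (fun p => ‖poissonBracket f E p * χ (E p)‖) (fun n => ?_) hint.norm (fun n => ?_) ?_
  · simp only [hterm] at hlim
    exact tendsto_nhds_unique hlim tendsto_const_nhds
  · exact ((continuousOn_poissonBracket hopen hf (hE.of_le one_le_two).contDiffOn).mul
      ((hcut n).1.comp hE.continuous).continuousOn).aestronglyMeasurable hopen.measurableSet
  · refine Filter.Eventually.of_forall fun p => ?_
    rw [← mul_assoc, norm_mul _ (trapezoidCutoff _ _ _ _), Real.norm_of_nonneg
      (trapezoidCutoff_nonneg _ _ _ _)]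
    exact mul_le_of_le_one_right (norm_nonneg _) (trapezoidCutoff_le_one _ _ _ _)
  · refine (ae_restrict_iff' hopen.measurableSet).2 (Filter.Eventually.of_forall fun p hp => ?_)
    rcases (ha p).eq_or_lt with hpa | hpa
    · have hmin : fderiv ℝ E p = 0 :=
        IsLocalMin.fderiv_eq_zero (Filter.Eventually.of_forall fun q => hpa ▸ ha q)
      have hzero : poissonBracket f E p = 0 := by
        rw [poissonBracket_eq_sum ((hf.differentiableOn one_ne_zero).differentiableAt
          (hopen.mem_nhds hp)) (hE.differentiable two_ne_zero p), hmin]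
        simp
      simp [hzero]
    · simpa using ((tendsto_trapezoidCutoff ⟨hpa, hp⟩).const_mul (χ (E p))).const_mul
        (poissonBracket f E p)

end Sublevel

/-- A continuous radial function whose profile has positive derivative is minimal at the origin. -/
lemma apply_zero_le_of_radial {μ : V → ℝ} {u : ℝ → ℝ} (hμ : Continuous μ)
    (hμu : ∀ x, μ x = u ‖x‖) (hu' : ∀ r : ℝ, 0 < r → 0 < deriv u r) (x : V) : μ 0 ≤ μ x := by
  have hcont : ContinuousOn u (Set.Ici 0) := by
    refine ContinuousOn.congr (f := fun r : ℝ => μ (r • EuclideanSpace.single 0 1))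
      (by fun_prop) fun r hr => ?_
    simp [hμu, norm_smul, abs_of_nonneg (Set.mem_Ici.1 hr)]
  have hmono := (strictMonoOn_of_deriv_pos (convex_Ici 0) hcont fun r hr =>
    hu' r (by simpa using hr)).monotoneOn
  simpa [hμu] using hmono (Set.mem_Ici.2 le_rfl) (Set.mem_Ici.2 (norm_nonneg x)) (norm_nonneg x)

/-- Integration by parts for the Poisson bracket against the particle energy
`E(x,v) = e^{μ(x)} √(1+|v|²)` on the bounded region `D = {E < E⁰}`: for `g, h ∈ C¹(D)` and a
continuous positive weight `χ` one has
`∫∫_D {g,E} h χ(E) = − ∫∫_D {h,E} g χ(E)`, without boundary conditions on `g`, `h`, or `χ`. -/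
theorem stmt3
    (μ : EuclideanSpace ℝ (Fin 3) → ℝ) (u : ℝ → ℝ)
    (hμC2 : ContDiff ℝ 2 μ)
    (hμu : ∀ x : EuclideanSpace ℝ (Fin 3), μ x = u ‖x‖)
    (hu' : ∀ r : ℝ, 0 < r → 0 < deriv u r)
    (E0 : ℝ) (hE0 : Real.exp (μ 0) < E0)
    (E : EuclideanSpace ℝ (Fin 3) × EuclideanSpace ℝ (Fin 3) → ℝ)
    (hE : E = fun p => Real.exp (μ p.1) * Real.sqrt (1 + ‖p.2‖ ^ 2))
    (D : Set (EuclideanSpace ℝ (Fin 3) × EuclideanSpace ℝ (Fin 3)))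
    (hD : D = {p | E p < E0})
    (hDbdd : Bornology.IsBounded D)
    (χ : ℝ → ℝ)
    (hχcont : ContinuousOn χ (Set.Ioo (Real.exp (μ 0)) E0))
    (hχpos : ∀ s ∈ Set.Ioo (Real.exp (μ 0)) E0, 0 < χ s)
    (g h : EuclideanSpace ℝ (Fin 3) × EuclideanSpace ℝ (Fin 3) → ℝ)
    (hg : ContDiffOn ℝ 1 g D) (hh : ContDiffOn ℝ 1 h D)
    (hint1 : IntegrableOn (fun p => poissonBracket g E p * h p * χ (E p)) D)
    (hint2 : IntegrableOn (fun p => poissonBracket h E p * g p * χ (E p)) D) :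
    ∫ p in D, poissonBracket g E p * h p * χ (E p) =
      - ∫ p in D, poissonBracket h E p * g p * χ (E p) := by
  have hEC : ContDiff ℝ 2 E := by
    rw [hE]
    exact (hμC2.comp contDiff_fst).exp.mul
      ((contDiff_const.add (contDiff_snd.norm_sq ℝ)).sqrt fun p => by positivity)
  have hEmin : ∀ p, Real.exp (μ 0) ≤ E p := by
    intro p
    rw [hE]
    have h1 : 1 ≤ Real.sqrt (1 + ‖p.2‖ ^ 2) :=
      Real.one_le_sqrt.2 (le_add_of_nonneg_right (sq_nonneg _))
    exact (Real.exp_le_exp.2 (apply_zero_le_of_radial hμC2.continuous hμu hu' p.1)).trans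
      (le_mul_of_one_le_right (Real.exp_pos _).le h1)
  subst hD
  have hopen : IsOpen {p | E p < E0} := isOpen_lt hEC.continuous continuous_const
  have hsum : Set.EqOn (fun p => poissonBracket (fun q => g q * h q) E p * χ (E p))
      (fun p => poissonBracket g E p * h p * χ (E p) + poissonBracket h E p * g p * χ (E p))
      {p | E p < E0} := fun p hp => by
    have hp' := hopen.mem_nhds hp
    simp only [poissonBracket_mul_left ((hg.differentiableOn one_ne_zero).differentiableAt hp')
      ((hh.differentiableOn one_ne_zero).differentiableAt hp')
      (hEC.differentiable two_ne_zero p)]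
    ring
  have hzero := setIntegral_poissonBracket_mul_comp_eq_zero hEC hEmin hDbdd (hg.mul hh) hχcont
    ((integrableOn_congr_fun hsum hopen.measurableSet).2 (hint1.add hint2))
  rw [setIntegral_congr_fun hopen.measurableSet hsum, integral_add hint1 hint2] at hzero
  exact eq_neg_of_add_eq_zero_left hzero

end
end

section
/- Let S : [0,∞) → [0,∞) be continuous with S(0) = 0 and |S(q) − 3q| ≤ C₀ q^{1/2} for all q ≥ 0 and some C₀ > 0. Suppose that for every κ > 0 there is a nonnegative solution p_κ ∈ C¹([0,∞)) of the TOV equation with ρ = S(p), with p_κ(0) = e^{4κ}/3, satisfying the Buchdahl bound 2m_κ(r)/r ≤ 8/9 for all r > 0, where m_κ(r) = 4π ∫₀^r s² S(p_κ(s)) ds; suppose also that there exists a positive solution p* ∈ C¹([0,∞)) of the massless TOV equation with p*(0) = 1/3 satisfying 2m*(r)/r ≤ 8/9 for all r > 0. Then there exist parameters 0 < α₁ < α₂ < 1/4, a threshold κ₀ > 0, and constants δ > 0 and C > 0 such that for every κ ≥ κ₀ and every r ∈ [κ^{α₁} e^{−2κ}, κ^{α₂} e^{−2κ}] the following estimates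 hold: | r² S(p_κ(r)) − 3/(56π) | ≤ C κ^{−δ}, | r² p_κ(r) − 1/(56π) | ≤ C κ^{−δ}, | m_κ(r)/r − 3/14 | ≤ C κ^{−δ}, | e^{2λ_κ(r)} − 7/4 | ≤ C κ^{−δ}, | 2r μ_κ′(r) − 1 | ≤ C κ^{−δ}, and r |λ_κ′(r)| ≤ C κ^{−δ}, where e^{−2λ_κ(r)} := 1 − 2m_κ(r)/r, μ_κ′(r) := e^{2λ_κ(r)} ( m_κ(r)/r² + 4π r p_κ(r) ), and λ_κ′(r) := e^{2λ_κ(r)} ( 4π r S(p_κ(r)) − m_κ(r)/r² ). -/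
open MeasureTheory

noncomputable section

/-- The quasi-local mass `m(r) = 4π ∫₀^r s² S(p(s)) ds` associated with a pressure profile `p`
and inverse equation of state `ρ = S(p)`. -/
def tovMass (S p : ℝ → ℝ) (r : ℝ) : ℝ :=
  4 * Real.pi * ∫ s in (0:ℝ)..r, s ^ 2 * S (p s)

/-- `p` is a nonnegative `C¹([0,∞))` solution of the TOV equation with equation of state
`ρ = S(p)`. -/
def SolvesTOV (S p : ℝ → ℝ) : Prop :=
  ContDiffOn ℝ 1 p (Set.Ici 0) ∧ (∀ r : ℝ, 0 ≤ r → 0 ≤ p r) ∧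
  (∀ r : ℝ, 0 < r → 2 * tovMass S p r / r < 1) ∧
  (∀ r : ℝ, 0 < r →
    deriv p r = -(S (p r) + p r) / (1 - 2 * tovMass S p r / r) *
      (tovMass S p r / r ^ 2 + 4 * Real.pi * r * p r))

/-- The Lotka–Volterra Lyapunov function centred at the BKZ point `(u, v) = (1/14, 4/7)`, where
`u = 4πr²p` and `v = 1 - 2m/r`. -/
def bkzEnergy (u v : ℝ) : ℝ :=
  3 * (u - 1 / 14 - 1 / 14 * Real.log (14 * u)) + 2 * (v - 4 / 7 - 4 / 7 * Real.log (7 / 4 * v))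

theorem Real.sub_one_sub_log_le {x : ℝ} (hx : 0 < x) :
    x - 1 - Real.log x ≤ (x - 1) ^ 2 / x := by
  have h := Real.one_sub_inv_le_log_of_pos hx
  have : (x - 1) ^ 2 / x = x - 2 + x⁻¹ := by field_simp; ring
  linarith

theorem Real.sq_div_le_sub_one_sub_log {x : ℝ} (hx : 0 < x) (hx' : x ≤ 16) :
    (x - 1) ^ 2 / 25 ≤ x - 1 - Real.log x := by
  obtain ⟨y, hy, rfl⟩ : ∃ y : ℝ, 0 < y ∧ x = y ^ 2 :=
    ⟨√x, Real.sqrt_pos.2 hx, (Real.sq_sqrt hx.le).symm⟩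
  have h := Real.log_le_sub_one_of_pos hy
  rw [Real.log_pow]
  have hy4 : y ≤ 4 := by nlinarith
  have : (y + 1) ^ 2 ≤ 25 := by nlinarith
  push_cast
  nlinarith [mul_le_mul_of_nonneg_left this (sq_nonneg (y - 1))]

theorem bkzEnergy_le {u v : ℝ} (hu : 0 < u) (hv : 0 < v) :
    bkzEnergy u v ≤ 3 * (u - 1 / 14) ^ 2 / u + 2 * (v - 4 / 7) ^ 2 / v := by
  have h1 := Real.sub_one_sub_log_le (x := 14 * u) (by positivity)
  have h2 := Real.sub_one_sub_log_le (x := 7 / 4 * v) (by positivity)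
  have e1 : 3 * (u - 1 / 14) ^ 2 / u = 3 / 14 * ((14 * u - 1) ^ 2 / (14 * u)) := by
    field_simp
  have e2 : 2 * (v - 4 / 7) ^ 2 / v = 8 / 7 * ((7 / 4 * v - 1) ^ 2 / (7 / 4 * v)) := by
    field_simp; ring
  rw [e1, e2, bkzEnergy]
  linarith

theorem sq_add_sq_le_bkzEnergy {u v : ℝ} (hu : 0 < u) (hu' : u ≤ 2 / 3) (hv : 0 < v)
    (hv' : v ≤ 1) : (u - 1 / 14) ^ 2 + (v - 4 / 7) ^ 2 ≤ 10 * bkzEnergy u v := by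
  have h1 := Real.sq_div_le_sub_one_sub_log (x := 14 * u) (by positivity) (by linarith)
  have h2 := Real.sq_div_le_sub_one_sub_log (x := 7 / 4 * v) (by positivity) (by linarith)
  have e1 : (14 * u - 1) ^ 2 = 196 * (u - 1 / 14) ^ 2 := by ring
  have e2 : (7 / 4 * v - 1) ^ 2 = 49 / 16 * (v - 4 / 7) ^ 2 := by ring
  rw [e1] at h1
  rw [e2] at h2
  rw [bkzEnergy]
  nlinarith [sq_nonneg (u - 1 / 14), sq_nonneg (v - 4 / 7)]

theorem lower_bound_of_bkzEnergy_le {u v B : ℝ} (hu : 0 < u) (hv : 0 < v) (hv' : v ≤ 1)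
    (h : bkzEnergy u v ≤ B) : Real.exp (-(14 * B / 3) - 1) / 14 ≤ u := by
  have h2 := Real.sq_div_le_sub_one_sub_log (x := 7 / 4 * v) (by positivity) (by linarith)
  have h3 : 0 ≤ (7 / 4 * v - 1) ^ 2 / 25 := by positivity
  have h4 : -(14 * B / 3) - 1 ≤ Real.log (14 * u) := by
    rw [bkzEnergy] at h
    linarith
  have := (Real.le_log_iff_exp_le (by positivity)).1 h4
  linarith

/-- Dissipation of the Lyapunov function under the perturbed flow. -/
theorem bkzEnergy_dissipation {u v e η : ℝ} (hu : 0 < u) (hu' : u ≤ 2 / 3) (hv : 1 / 9 ≤ v)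
    (hv' : v ≤ 1) (he : |e| ≤ η * u) :
    3 * ((u - 1 / 14) / u * (2 * u - (4 * u + e) * ((1 - v) / 2 + u) / v)) +
        2 * ((v - 4 / 7) / v * (1 - v - 6 * u - 2 * e)) ≤
      -(12 * (u - 1 / 14) ^ 2 + 2 * (v - 4 / 7) ^ 2) + 60 * η := by
  have hv0 : 0 < v := by linarith
  have hη : 0 ≤ η := by
    by_contra! h
    nlinarith [abs_nonneg e]
  obtain ⟨d, rfl⟩ : ∃ d, e = d * u := ⟨e / u, by field_simp⟩
  have hd : |d| ≤ η := by
    rw [abs_mul, abs_of_pos hu] at he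
    exact le_of_mul_le_mul_right he hu
  have key : 3 * ((u - 1 / 14) / u * (2 * u - (4 * u + d * u) * ((1 - v) / 2 + u) / v)) +
        2 * ((v - 4 / 7) / v * (1 - v - 6 * u - 2 * (d * u))) =
      -(12 * (u - 1 / 14) ^ 2 + 2 * (v - 4 / 7) ^ 2) / v
        - d * (3 * (u - 1 / 14) * ((1 - v) / 2 + u) + 4 * (v - 4 / 7) * u) / v := by
    field_simp
    ring
  have h1 : -(12 * (u - 1 / 14) ^ 2 + 2 * (v - 4 / 7) ^ 2) / v ≤
      -(12 * (u - 1 / 14) ^ 2 + 2 * (v - 4 / 7) ^ 2) := by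
    rw [div_le_iff₀ hv0]
    nlinarith [sq_nonneg (u - 1 / 14), sq_nonneg (v - 4 / 7)]
  have hX : |3 * (u - 1 / 14) * ((1 - v) / 2 + u) + 4 * (v - 4 / 7) * u| ≤ 20 / 3 := by
    rw [abs_le]
    constructor <;> nlinarith
  have h2 : |d * (3 * (u - 1 / 14) * ((1 - v) / 2 + u) + 4 * (v - 4 / 7) * u) / v| ≤ 60 * η := by
    rw [abs_div, abs_mul, abs_of_pos hv0, div_le_iff₀ hv0]
    calc _ ≤ η * (20 / 3) := by gcongr
      _ ≤ 60 * η * v := by nlinarith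
  rw [key]
  linarith [neg_le_of_abs_le h2]

section Flow

variable {u v e : ℝ → ℝ} {a b η : ℝ}

theorem hasDerivAt_bkzEnergy {r u' v' : ℝ} (hu : HasDerivAt u u' r) (hv : HasDerivAt v v' r)
    (hu0 : 0 < u r) (hv0 : 0 < v r) :
    HasDerivAt (fun s => bkzEnergy (u s) (v s))
      (3 * ((u r - 1 / 14) / u r * u') + 2 * ((v r - 4 / 7) / v r * v')) r := by
  have h1 := (hu.const_mul 14).log (by positivity)
  have h2 := (hv.const_mul (7 / 4)).log (by positivity)
  have h := (((hu.sub_const (1 / 14)).sub (h1.const_mul (1 / 14))).const_mul 3).add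
    (((hv.sub_const (4 / 7)).sub (h2.const_mul (4 / 7))).const_mul 2)
  refine h.congr_deriv ?_
  field_simp

theorem antitoneOn_Icc_of_hasDerivAt_nonpos {f f' : ℝ → ℝ}
    (hf : ∀ x ∈ Set.Icc a b, HasDerivAt f (f' x) x) (hf' : ∀ x ∈ Set.Icc a b, f' x ≤ 0) :
    AntitoneOn f (Set.Icc a b) :=
  antitoneOn_of_hasDerivWithinAt_nonpos (convex_Icc a b)
    (fun x hx => (hf x hx).continuousAt.continuousWithinAt)
    (fun x hx => (hf x (interior_subset hx)).hasDerivWithinAt)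
    (fun x hx => hf' x (interior_subset hx))

/-- Decay of the Lyapunov function along the perturbed flow: first a crude bound keeps the orbit
away from `u = 0`, then the dissipation controls the energy itself. -/
theorem bkzEnergy_decay {B : ℝ} (ha : 0 < a) (hB : 0 ≤ B)
    (hu : ∀ r ∈ Set.Icc a b, HasDerivAt u
      ((2 * u r - (4 * u r + e r) * ((1 - v r) / 2 + u r) / v r) / r) r)
    (hv : ∀ r ∈ Set.Icc a b, HasDerivAt v ((1 - v r - 6 * u r - 2 * e r) / r) r)
    (hu0 : ∀ r ∈ Set.Icc a b, 0 < u r) (hu1 : ∀ r ∈ Set.Icc a b, u r ≤ 2 / 3)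
    (hv0 : ∀ r ∈ Set.Icc a b, 1 / 9 ≤ v r) (hv1 : ∀ r ∈ Set.Icc a b, v r ≤ 1)
    (he : ∀ r ∈ Set.Icc a b, |e r| ≤ η * u r) (hη : 0 ≤ η)
    (hstart : bkzEnergy (u a) (v a) ≤ B) (hlog : 60 * η * Real.log (b / a) ≤ 1)
    {r : ℝ} (hr : r ∈ Set.Icc a b) :
    let c := Real.exp (-(14 * (B + 1) / 3) - 1) / 14
    bkzEnergy (u r) (v r) ≤ 60 * η / c + (a / r) ^ c * B := by
  intro c
  have hc : 0 < c := by positivity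
  have hc1 : c ≤ 1 / 14 := by
    have : Real.exp (-(14 * (B + 1) / 3) - 1) ≤ 1 := Real.exp_le_one_iff.2 (by linarith)
    simp only [c]; linarith
  have hpos : ∀ r ∈ Set.Icc a b, 0 < r := fun r hr => ha.trans_le hr.1
  have hv0' : ∀ r ∈ Set.Icc a b, 0 < v r := fun r hr => by linarith [hv0 r hr]
  have hE := fun r hr =>
    hasDerivAt_bkzEnergy (hu r hr) (hv r hr) (hu0 r hr) (hv0' r hr)
  have hD : ∀ r ∈ Set.Icc a b,
      3 * ((u r - 1 / 14) / u r *
          ((2 * u r - (4 * u r + e r) * ((1 - v r) / 2 + u r) / v r) / r)) +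
        2 * ((v r - 4 / 7) / v r * ((1 - v r - 6 * u r - 2 * e r) / r)) ≤
      (-(12 * (u r - 1 / 14) ^ 2 + 2 * (v r - 4 / 7) ^ 2) + 60 * η) / r := by
    intro r hr
    have h := bkzEnergy_dissipation (hu0 r hr) (hu1 r hr) (hv0 r hr) (hv1 r hr) (he r hr)
    rw [le_div_iff₀ (hpos r hr)]
    refine le_of_eq_of_le ?_ h
    have := hpos r hr
    generalize (2 * u r - (4 * u r + e r) * ((1 - v r) / 2 + u r) / v r) = X
    field_simp
  have haa : ∀ {r}, r ∈ Set.Icc a b → a ∈ Set.Icc a b := fun hr => ⟨le_rfl, hr.1.trans hr.2⟩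
  have hcrude : ∀ r ∈ Set.Icc a b, bkzEnergy (u r) (v r) ≤ B + 1 := by
    intro r hr
    have hanti := antitoneOn_Icc_of_hasDerivAt_nonpos
      (fun x hx => (hE x hx).sub ((Real.hasDerivAt_log (hpos x hx).ne').const_mul (60 * η)))
      (fun x hx => by
        have h1 := hD x hx
        have h2 : (-(12 * (u x - 1 / 14) ^ 2 + 2 * (v x - 4 / 7) ^ 2) + 60 * η) / x
            ≤ 60 * η * x⁻¹ := by
          rw [div_eq_mul_inv]
          have := inv_pos.2 (hpos x hx)
          gcongr
          nlinarith [sq_nonneg (u x - 1 / 14), sq_nonneg (v x - 4 / 7)]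
        linarith)
    have h := hanti (haa hr) hr hr.1
    simp only [Pi.sub_apply] at h
    have hrb : Real.log r ≤ Real.log b := Real.log_le_log (hpos r hr) hr.2
    rw [Real.log_div (by linarith [hpos r hr, hr.2]) ha.ne'] at hlog
    nlinarith
  have hdiss : ∀ r ∈ Set.Icc a b,
      c * bkzEnergy (u r) (v r) ≤ 12 * (u r - 1 / 14) ^ 2 + 2 * (v r - 4 / 7) ^ 2 := by
    intro r hr
    have hcu : c ≤ u r :=
      lower_bound_of_bkzEnergy_le (hu0 r hr) (hv0' r hr) (hv1 r hr) (hcrude r hr)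
    have h1 := bkzEnergy_le (hu0 r hr) (hv0' r hr)
    have h2 : c * (3 * (u r - 1 / 14) ^ 2 / u r) ≤ 3 * (u r - 1 / 14) ^ 2 := by
      rw [← mul_div_assoc, div_le_iff₀ (hu0 r hr)]
      nlinarith [sq_nonneg (u r - 1 / 14)]
    have h3 : c * (2 * (v r - 4 / 7) ^ 2 / v r) ≤ 2 * (v r - 4 / 7) ^ 2 := by
      rw [← mul_div_assoc, div_le_iff₀ (hv0' r hr)]
      nlinarith [sq_nonneg (v r - 4 / 7), hv0 r hr]
    nlinarith [sq_nonneg (u r - 1 / 14)]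
  have hanti := antitoneOn_Icc_of_hasDerivAt_nonpos
    (fun x hx => (Real.hasDerivAt_rpow_const (p := c) (Or.inl (hpos x hx).ne')).mul
      ((hE x hx).sub_const (60 * η / c)))
    (fun x hx => by
      have hx0 := hpos x hx
      have h1 := hD x hx
      have h2 := hdiss x hx
      have h3 : (-(12 * (u x - 1 / 14) ^ 2 + 2 * (v x - 4 / 7) ^ 2) + 60 * η) / x ≤
          -(c * x⁻¹ * (bkzEnergy (u x) (v x) - 60 * η / c)) := by
        rw [div_le_iff₀ hx0]
        have : -(c * x⁻¹ * (bkzEnergy (u x) (v x) - 60 * η / c)) * x =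
          -(c * bkzEnergy (u x) (v x)) + 60 * η := by field_simp; ring
        rw [this]; linarith
      rw [Real.rpow_sub_one hx0.ne']
      have hxc := Real.rpow_pos_of_pos hx0 c
      calc _ ≤ c * (x ^ c / x) * (bkzEnergy (u x) (v x) - 60 * η / c) +
            x ^ c * -(c * x⁻¹ * (bkzEnergy (u x) (v x) - 60 * η / c)) := by
            gcongr; exact h1.trans h3
        _ = 0 := by rw [div_eq_mul_inv]; ring
        _ ≤ 0 := le_rfl)
  have h := hanti (haa hr) hr hr.1
  simp only [Pi.mul_apply] at h
  have hr0 := hpos r hr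
  have hrc := Real.rpow_pos_of_pos hr0 c
  have hac := Real.rpow_pos_of_pos ha c
  rw [Real.div_rpow ha.le hr0.le, ← sub_le_iff_le_add', div_mul_eq_mul_div, le_div_iff₀ hrc]
  have h0 : 0 ≤ 60 * η / c := by positivity
  nlinarith

end Flow

section Profile

variable {S p : ℝ → ℝ}

theorem SolvesTOV.hasDerivAt (h : SolvesTOV S p) {r : ℝ} (hr : 0 < r) :
    HasDerivAt p (-(S (p r) + p r) / (1 - 2 * tovMass S p r / r) *
      (tovMass S p r / r ^ 2 + 4 * Real.pi * r * p r)) r := by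
  rw [← h.2.2.2 r hr]
  exact ((h.1.differentiableOn one_ne_zero r hr.le).differentiableAt
    (Ici_mem_nhds hr)).hasDerivAt

theorem SolvesTOV.continuousOn_integrand (h : SolvesTOV S p) (hS : ContinuousOn S (Set.Ici 0)) :
    ContinuousOn (fun s => s ^ 2 * S (p s)) (Set.Ici 0) :=
  (continuousOn_id.pow 2).mul (hS.comp h.1.continuousOn fun r hr => h.2.1 r hr)

theorem SolvesTOV.intervalIntegrable (h : SolvesTOV S p) (hS : ContinuousOn S (Set.Ici 0))
    {r : ℝ} (hr : 0 ≤ r) : IntervalIntegrable (fun s => s ^ 2 * S (p s)) volume 0 r := by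
  refine ((h.continuousOn_integrand hS).mono ?_).intervalIntegrable
  rw [Set.uIcc_of_le hr]
  exact Set.Icc_subset_Ici_self

theorem SolvesTOV.hasDerivAt_tovMass (h : SolvesTOV S p) (hS : ContinuousOn S (Set.Ici 0))
    {r : ℝ} (hr : 0 < r) :
    HasDerivAt (tovMass S p) (4 * Real.pi * (r ^ 2 * S (p r))) r := by
  have hc := h.continuousOn_integrand hS
  have hcr : ContinuousAt (fun s => s ^ 2 * S (p s)) r := hc.continuousAt (Ici_mem_nhds hr)
  have hmeas : StronglyMeasurableAtFilter (fun s => s ^ 2 * S (p s)) (nhds r) volume :=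
    (hc.mono Set.Ioi_subset_Ici_self).stronglyMeasurableAtFilter isOpen_Ioi r hr
  exact (intervalIntegral.integral_hasDerivAt_right (h.intervalIntegrable hS hr.le)
    hmeas hcr).const_mul _

theorem SolvesTOV.tovMass_nonneg (h : SolvesTOV S p) (hS : ∀ q, 0 ≤ q → 0 ≤ S q) {r : ℝ}
    (hr : 0 ≤ r) : 0 ≤ tovMass S p r := by
  refine mul_nonneg (by positivity) (intervalIntegral.integral_nonneg hr fun s hs => ?_)
  exact mul_nonneg (sq_nonneg s) (hS _ (h.2.1 s hs.1))

theorem SolvesTOV.antitoneOn (h : SolvesTOV S p) (hS : ∀ q, 0 ≤ q → 0 ≤ S q) :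
    AntitoneOn p (Set.Ici 0) := by
  refine antitoneOn_of_hasDerivWithinAt_nonpos (convex_Ici 0) h.1.continuousOn
    (fun r hr => (h.hasDerivAt (by simpa using hr)).hasDerivWithinAt) fun r hr => ?_
  have hr : 0 < r := by simpa using hr
  have hp := h.2.1 r hr.le
  have hSp := hS _ hp
  have hm := h.tovMass_nonneg hS hr.le
  have hv := h.2.2.1 r hr
  refine mul_nonpos_of_nonpos_of_nonneg ?_ (by positivity)
  exact div_nonpos_of_nonpos_of_nonneg (by linarith) (by linarith)

theorem SolvesTOV.tovMass_le (h : SolvesTOV S p) (hS : ContinuousOn S (Set.Ici 0)) {r K : ℝ}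
    (hr : 0 ≤ r) (hK : ∀ s ∈ Set.Icc 0 r, S (p s) ≤ K) :
    tovMass S p r ≤ 4 * Real.pi / 3 * K * r ^ 3 := by
  have : ∫ s in (0:ℝ)..r, s ^ 2 * S (p s) ≤ ∫ s in (0:ℝ)..r, s ^ 2 * K :=
    intervalIntegral.integral_mono_on hr (h.intervalIntegrable hS hr)
      (Continuous.intervalIntegrable (by fun_prop) _ _)
      fun s hs => mul_le_mul_of_nonneg_left (hK s hs) (sq_nonneg s)
  have e : ∫ s in (0:ℝ)..r, s ^ 2 * K = r ^ 3 / 3 * K := by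
    rw [intervalIntegral.integral_mul_const, integral_pow]; norm_num
  rw [e] at this
  rw [tovMass]
  nlinarith [mul_le_mul_of_nonneg_left this Real.pi_pos.le]

theorem SolvesTOV.le_tovMass (h : SolvesTOV S p) (hS : ContinuousOn S (Set.Ici 0)) {r K : ℝ}
    (hr : 0 ≤ r) (hK : ∀ s ∈ Set.Icc 0 r, K ≤ S (p s)) :
    4 * Real.pi / 3 * K * r ^ 3 ≤ tovMass S p r := by
  have : ∫ s in (0:ℝ)..r, s ^ 2 * K ≤ ∫ s in (0:ℝ)..r, s ^ 2 * S (p s) :=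
    intervalIntegral.integral_mono_on hr (Continuous.intervalIntegrable (by fun_prop) _ _)
      (h.intervalIntegrable hS hr)
      fun s hs => mul_le_mul_of_nonneg_left (hK s hs) (sq_nonneg s)
  have e : ∫ s in (0:ℝ)..r, s ^ 2 * K = r ^ 3 / 3 * K := by
    rw [intervalIntegral.integral_mul_const, integral_pow]; norm_num
  rw [e] at this
  rw [tovMass]
  nlinarith [mul_le_mul_of_nonneg_left this Real.pi_pos.le]

/-- Taylor-type lower bound for the pressure near the center. -/
theorem SolvesTOV.center_lower_bound (h : SolvesTOV S p) (hSc : ContinuousOn S (Set.Ici 0))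
    (hS : ∀ q, 0 ≤ q → 0 ≤ S q) (hB : ∀ r, 0 < r → 2 * tovMass S p r / r ≤ 8 / 9)
    (hS4 : ∀ q, 0 ≤ q → q ≤ p 0 → S q ≤ 4 * p 0) {r : ℝ} (hr : 0 ≤ r) :
    p 0 - 210 * Real.pi * p 0 ^ 2 * r ^ 2 ≤ p r := by
  have hanti := h.antitoneOn hS
  have hle : ∀ s, 0 ≤ s → p s ≤ p 0 := fun s hs => hanti Set.self_mem_Ici hs hs
  have hp0 := h.2.1 0 le_rfl
  have hmono : MonotoneOn (fun s => p s + 210 * Real.pi * p 0 ^ 2 * s ^ 2) (Set.Ici 0) := by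
    refine monotoneOn_of_hasDerivWithinAt_nonneg (convex_Ici 0)
      (h.1.continuousOn.add (by fun_prop))
      (fun s hs => ((h.hasDerivAt (by simpa using hs)).add
        ((hasDerivAt_pow 2 s).const_mul _)).hasDerivWithinAt) fun s hs => ?_
    have hs : 0 < s := by simpa using hs
    have hp := h.2.1 s hs.le
    have hSp := hS _ hp
    have hps := hle s hs.le
    have hm := h.tovMass_nonneg hS hs.le
    have hmle := h.tovMass_le hSc hs.le (K := 4 * p 0)
      fun x hx => hS4 _ (h.2.1 x hx.1) (hle x hx.1)
    have hv : 1 / 9 ≤ 1 - 2 * tovMass S p s / s := by linarith [hB s hs]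
    have h1 : (S (p s) + p s) / (1 - 2 * tovMass S p s / s) ≤ 45 * p 0 := by
      rw [div_le_iff₀ (by linarith)]
      nlinarith [hS4 _ hp hps]
    have h2 : tovMass S p s / s ^ 2 + 4 * Real.pi * s * p s ≤ 28 / 3 * Real.pi * p 0 * s := by
      have : tovMass S p s / s ^ 2 ≤ 16 / 3 * Real.pi * p 0 * s := by
        rw [div_le_iff₀ (by positivity)]
        linarith
      have : 4 * Real.pi * s * p s ≤ 4 * Real.pi * s * p 0 := by gcongr
      linarith
    have h3 := mul_le_mul h1 h2 (by positivity) (by positivity)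
    rw [neg_div, neg_mul]
    push_cast
    linarith
  have := hmono Set.self_mem_Ici hr hr
  simp only at this
  linarith

/-- Where the equation of state is nearly radiative, `4πr²p` is bounded. -/
theorem SolvesTOV.pressure_le (h : SolvesTOV S p) (hSc : ContinuousOn S (Set.Ici 0))
    (hS : ∀ q, 0 ≤ q → 0 ≤ S q) (hB : ∀ r, 0 < r → 2 * tovMass S p r / r ≤ 8 / 9)
    {L η : ℝ} (hη : η ≤ 1) (hSL : ∀ q, 0 ≤ q → L ≤ q → |S q - 3 * q| ≤ η * q)
    {r : ℝ} (hr : 0 < r) (hpr : L ≤ p r) : 4 * Real.pi * r ^ 2 * p r ≤ 2 / 3 := by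
  have hanti := h.antitoneOn hS
  have hm := h.le_tovMass hSc hr.le (K := 2 * p r) fun s hs => by
    have h1 : p r ≤ p s := hanti hs.1 hr.le hs.2
    have h2 := neg_le_of_abs_le (hSL (p s) (h.2.1 s hs.1) (hpr.trans h1))
    nlinarith [h.2.1 s hs.1]
  have := hB r hr
  rw [div_le_iff₀ hr] at this
  refine le_of_mul_le_mul_right ?_ hr
  linarith

/-- The pressure decays at most polynomially, hence stays above a level `L` for long. -/
theorem SolvesTOV.level_le (h : SolvesTOV S p) (hSc : ContinuousOn S (Set.Ici 0))
    (hS : ∀ q, 0 ≤ q → 0 ≤ S q) (hB : ∀ r, 0 < r → 2 * tovMass S p r / r ≤ 8 / 9)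
    {L η : ℝ} (hη : η ≤ 1) (hSL : ∀ q, 0 ≤ q → L ≤ q → |S q - 3 * q| ≤ η * q)
    {a b : ℝ} (ha : 0 < a) (hab : a ≤ b) (hL : L * b ^ 50 < p a * a ^ 50) : L ≤ p b := by
  by_contra! hlt
  have hanti := h.antitoneOn hS
  have hb : 0 < b := ha.trans_le hab
  have hLa : L ≤ p a := by
    by_contra! hlt'
    have h1 : a ^ 50 ≤ b ^ 50 := by gcongr
    have h2 := h.2.1 a ha.le
    have h3 : p a * a ^ 50 ≤ L * b ^ 50 := by gcongr; linarith
    linarith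
  obtain ⟨c, hc, hpc⟩ := intermediate_value_Icc' hab
    (h.1.continuousOn.mono fun x hx => ha.le.trans hx.1) ⟨hlt.le, hLa⟩
  have hmono : MonotoneOn (fun s => p s * s ^ 50) (Set.Icc a c) := by
    have hd : ∀ s ∈ Set.Icc a c, HasDerivAt (fun s => p s * s ^ 50) _ s := fun s hs =>
      (h.hasDerivAt (ha.trans_le hs.1)).mul (hasDerivAt_pow 50 s)
    refine monotoneOn_of_hasDerivWithinAt_nonneg (convex_Icc a c)
      (fun s hs => (hd s hs).continuousAt.continuousWithinAt)
      (fun s hs => (hd s (interior_subset hs)).hasDerivWithinAt) fun s hs => ?_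
    have hs := interior_subset hs
    have hs0 : 0 < s := ha.trans_le hs.1
    have hLs : L ≤ p s := hpc ▸ hanti hs0.le (ha.le.trans hc.1) hs.2
    have hp := h.2.1 s hs0.le
    have hu := h.pressure_le hSc hS hB hη hSL hs0 hLs
    have hv : 1 / 9 ≤ 1 - 2 * tovMass S p s / s := by linarith [hB s hs0]
    have hm := h.tovMass_nonneg hS hs0.le
    have h1 : (S (p s) + p s) / (1 - 2 * tovMass S p s / s) ≤ 45 * p s := by
      rw [div_le_iff₀ (by linarith)]
      nlinarith [le_of_abs_le (hSL _ hp hLs)]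
    have h2 : tovMass S p s / s ^ 2 + 4 * Real.pi * s * p s ≤ 10 / 9 / s := by
      have e : tovMass S p s / s ^ 2 + 4 * Real.pi * s * p s =
        (2 * tovMass S p s / s / 2 + 4 * Real.pi * s ^ 2 * p s) / s := by field_simp
      rw [e]
      gcongr
      linarith [hB s hs0]
    have h3 := mul_le_mul h1 h2 (by positivity) (by positivity)
    have h4 : 45 * p s * (10 / 9 / s) * s ^ 50 = p s * (50 * s ^ 49) := by
      field_simp; ring
    have h5 := mul_le_mul_of_nonneg_right h3 (by positivity : 0 ≤ s ^ 50)
    rw [neg_div, neg_mul]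
    push_cast
    linarith
  have h1 := hmono ⟨le_rfl, hc.1⟩ ⟨hc.1, le_rfl⟩ hc.1
  simp only [hpc] at h1
  have hc0 : 0 ≤ c := ha.le.trans hc.1
  have hL0 : 0 ≤ L := hpc ▸ h.2.1 c hc0
  have : L * c ^ 50 ≤ L * b ^ 50 := by gcongr; exact hc.2
  linarith

/-- Decay of the Lyapunov function along a TOV solution with nearly radiative equation of
state. -/
theorem SolvesTOV.bkzEnergy_decay (h : SolvesTOV S p) (hSc : ContinuousOn S (Set.Ici 0))
    (hS : ∀ q, 0 ≤ q → 0 ≤ S q) (hB : ∀ r, 0 < r → 2 * tovMass S p r / r ≤ 8 / 9)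
    {L η : ℝ} (hL0 : 0 < L) (hη0 : 0 ≤ η) (hη : η ≤ 1)
    (hSL : ∀ q, 0 ≤ q → L ≤ q → |S q - 3 * q| ≤ η * q)
    {a b B : ℝ} (ha : 0 < a) (hb : L ≤ p b) (hB0 : 0 ≤ B)
    (hstart : bkzEnergy (4 * Real.pi * a ^ 2 * p a) (1 - 2 * tovMass S p a / a) ≤ B)
    (hlog : 60 * η * Real.log (b / a) ≤ 1) {r : ℝ} (hr : r ∈ Set.Icc a b) :
    let c := Real.exp (-(14 * (B + 1) / 3) - 1) / 14
    bkzEnergy (4 * Real.pi * r ^ 2 * p r) (1 - 2 * tovMass S p r / r) ≤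
      60 * η / c + (a / r) ^ c * B := by
  have hanti := h.antitoneOn hS
  have hpos : ∀ s ∈ Set.Icc a b, 0 < s := fun s hs => ha.trans_le hs.1
  have hLs : ∀ s ∈ Set.Icc a b, L ≤ p s := fun s hs =>
    hb.trans (hanti (hpos s hs).le ((hpos s hs).le.trans hs.2) hs.2)
  refine _root_.bkzEnergy_decay (u := fun s => 4 * Real.pi * s ^ 2 * p s)
    (v := fun s => 1 - 2 * tovMass S p s / s)
    (e := fun s => 4 * Real.pi * s ^ 2 * (S (p s) - 3 * p s))
    ha hB0 (fun s hs => ?_) (fun s hs => ?_) (fun s hs => ?_) (fun s hs => ?_)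
    (fun s hs => ?_) (fun s hs => ?_) (fun s hs => ?_) hη0 hstart hlog hr
  · have hs0 := hpos s hs
    have hv : 1 - 2 * tovMass S p s / s ≠ 0 := by linarith [h.2.2.1 s hs0]
    refine (((hasDerivAt_pow 2 s).const_mul (4 * Real.pi)).mul
      (h.hasDerivAt hs0)).congr_deriv ?_
    have e1 : tovMass S p s / s ^ 2 = (1 - (1 - 2 * tovMass S p s / s)) / (2 * s) := by
      field_simp; ring
    rw [e1]
    generalize 1 - 2 * tovMass S p s / s = v at hv
    field_simp
    push_cast
    ring
  · have hs0 := hpos s hs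
    refine ((((h.hasDerivAt_tovMass hSc hs0).const_mul 2).div (hasDerivAt_id s)
      hs0.ne').const_sub 1).congr_deriv ?_
    simp only [id]
    field_simp
    ring
  · have := hpos s hs
    have := hL0.trans_le (hLs s hs)
    positivity
  · exact h.pressure_le hSc hS hB hη hSL (hpos s hs) (hLs s hs)
  · linarith [hB s (hpos s hs)]
  · have := h.tovMass_nonneg hS (hpos s hs).le
    have := hpos s hs
    have : 0 ≤ 2 * tovMass S p s / s := by positivity
    linarith
  · have := hpos s hs
    rw [abs_mul, abs_of_nonneg (by positivity)]
    nlinarith [mul_le_mul_of_nonneg_left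
      (hSL (p s) (h.2.1 s this.le) (hLs s hs)) (by positivity : 0 ≤ 4 * Real.pi * s ^ 2)]

end Profile

/-- Closeness to the BKZ point in the variables `4πr²p`, `1 - 2m/r` implies closeness of all
physical quantities. -/
theorem bkz_estimates {r m q σ η D : ℝ} (hr : 0 < r)
    (hu : 4 * Real.pi * r ^ 2 * q ≤ 2 / 3) (hv : 1 / 9 ≤ 1 - 2 * m / r)
    (hσ : |σ - 3 * q| ≤ η * q) (hη : η ≤ D) (hη0 : 0 ≤ η)
    (huD : |4 * Real.pi * r ^ 2 * q - 1 / 14| ≤ D) (hvD : |1 - 2 * m / r - 4 / 7| ≤ D) :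
    |r ^ 2 * σ - 3 / (56 * Real.pi)| ≤ 100 * D ∧
    |r ^ 2 * q - 1 / (56 * Real.pi)| ≤ 100 * D ∧
    |m / r - 3 / 14| ≤ 100 * D ∧
    |(1 - 2 * m / r)⁻¹ - 7 / 4| ≤ 100 * D ∧
    |2 * r * ((1 - 2 * m / r)⁻¹ * (m / r ^ 2 + 4 * Real.pi * r * q)) - 1| ≤ 100 * D ∧
    r * |(1 - 2 * m / r)⁻¹ * (4 * Real.pi * r * σ - m / r ^ 2)| ≤ 100 * D := by
  have hπ := Real.pi_gt_three
  have hD0 : 0 ≤ D := hη0.trans hη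
  have he : |4 * Real.pi * r ^ 2 * (σ - 3 * q)| ≤ D := by
    rw [abs_mul, abs_of_nonneg (by positivity)]
    calc _ ≤ 4 * Real.pi * r ^ 2 * (η * q) := by gcongr
      _ = 4 * Real.pi * r ^ 2 * q * η := by ring
      _ ≤ 1 * D := by gcongr; linarith
      _ = D := one_mul D
  obtain ⟨v, hveq⟩ : ∃ v, v = 1 - 2 * m / r := ⟨_, rfl⟩
  obtain ⟨u, hueq⟩ : ∃ u, u = 4 * Real.pi * r ^ 2 * q := ⟨_, rfl⟩
  obtain ⟨e, heeq⟩ : ∃ e, e = 4 * Real.pi * r ^ 2 * (σ - 3 * q) := ⟨_, rfl⟩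
  have hm : m = (1 - v) / 2 * r := by rw [hveq]; field_simp; ring
  have hqu : q = u / (4 * Real.pi * r ^ 2) := by rw [hueq]; field_simp
  have hσe : σ = (e + 3 * u) / (4 * Real.pi * r ^ 2) := by rw [heeq, hueq]; field_simp; ring
  rw [← hveq] at hv hvD ⊢
  rw [← hueq] at hu huD
  rw [← heeq] at he
  have hv0 : 0 < v := by linarith
  rw [abs_le] at huD hvD he
  have hdiv : ∀ x y, |x| ≤ 11 * D → y = x / v → |y| ≤ 100 * D := by
    rintro x y hx rfl
    rw [abs_div, abs_of_pos hv0, div_le_iff₀ hv0]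
    nlinarith
  have hdivπ : ∀ x y, |x| ≤ 4 * D → y = x / (4 * Real.pi) → |y| ≤ 100 * D := by
    rintro x y hx rfl
    rw [abs_div, abs_of_pos (by positivity : 0 < 4 * Real.pi), div_le_iff₀ (by positivity)]
    nlinarith
  refine ⟨?_, ?_, ?_, ?_, ?_, ?_⟩
  · refine hdivπ (e + 3 * (u - 1 / 14)) _ (by rw [abs_le]; constructor <;> linarith) ?_
    rw [hσe]; field_simp; ring
  · refine hdivπ (u - 1 / 14) _ (by rw [abs_le]; constructor <;> linarith) ?_
    rw [hqu]; field_simp; ring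
  · have : m / r = (1 - v) / 2 := by rw [hm]; field_simp
    rw [this, abs_le]
    constructor <;> linarith
  · refine hdiv (-(7 / 4) * (v - 4 / 7)) _ (by rw [abs_le]; constructor <;> linarith) ?_
    field_simp; ring
  · refine hdiv (2 * (u - 1 / 14) - 2 * (v - 4 / 7)) _
      (by rw [abs_le]; constructor <;> linarith) ?_
    rw [hm, hqu]; field_simp; ring
  · nth_rewrite 1 [← abs_of_pos hr]
    rw [← abs_mul]
    refine hdiv (e + 3 * (u - 1 / 14) + (v - 4 / 7) / 2) _
      (by rw [abs_le]; constructor <;> linarith) ?_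
    rw [hm, hσe]; field_simp; ring

/-- The energy at radius `e^{-2κ}/100` is bounded independently of `κ`. -/
theorem bkzEnergy_start_le {u v : ℝ} (hu : 1 / 5000 ≤ u) (hu' : u ≤ 2 / 3) (hv : 1 / 9 ≤ v)
    (hv' : v ≤ 1) : bkzEnergy u v ≤ 20000 := by
  refine (bkzEnergy_le (by linarith) (by linarith)).trans ?_
  have h1 : 3 * (u - 1 / 14) ^ 2 / u ≤ 15000 := by
    rw [div_le_iff₀ (by linarith)]; nlinarith
  have h2 : 2 * (v - 4 / 7) ^ 2 / v ≤ 18 := by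
    rw [div_le_iff₀ (by linarith)]; nlinarith
  linarith

/-- With `X = b^50 / κ = N a^50`, the level `E²` is not reached before the radius `b`. -/
theorem level_gap {E N X κ q : ℝ} (hN : 0 < N) (hX : 0 < X) (hκ : 0 < κ) (hE : 1 ≤ E)
    (h : 7 * N * κ ≤ E) (hq : E ^ 4 / 6 ≤ q) : E ^ 2 * (κ * X) < q * (N⁻¹ * X) := by
  have hNκ : 0 < N * κ := by positivity
  have h1 : 6 * N * κ < E ^ 2 := by nlinarith
  have h2 : E ^ 2 * κ < E ^ 4 / 6 * N⁻¹ := by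
    rw [← div_eq_mul_inv, lt_div_iff₀ hN, lt_div_iff₀ (by norm_num)]
    nlinarith [mul_lt_mul_of_pos_left h1 (by positivity : 0 < E ^ 2)]
  calc E ^ 2 * (κ * X) = E ^ 2 * κ * X := by ring
    _ < E ^ 4 / 6 * N⁻¹ * X := by gcongr
    _ ≤ q * N⁻¹ * X := by gcongr
    _ = q * (N⁻¹ * X) := by ring

/-- The equation of state is nearly radiative above the level `E²`. -/
theorem nearly_radiative {S : ℝ → ℝ} {C₀ E : ℝ} (hC₀ : 0 ≤ C₀) (hE0 : 0 < E)
    (hS : ∀ q : ℝ, 0 ≤ q → |S q - 3 * q| ≤ C₀ * √q) (q : ℝ) (hq : 0 ≤ q) (hLq : E ^ 2 ≤ q) :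
    |S q - 3 * q| ≤ C₀ / E * q := by
  refine (hS q hq).trans ?_
  have h1 : E ≤ √q := Real.le_sqrt_of_sq_le hLq
  have h2 := Real.mul_self_sqrt hq
  rw [div_mul_eq_mul_div, le_div_iff₀ hE0, mul_assoc]
  gcongr
  nlinarith [Real.sqrt_nonneg q]

/-- Bounds on the annulus for a single profile, with `E = e^κ`. -/
theorem SolvesTOV.annulus_bounds {S p : ℝ → ℝ} {C₀ E N κ c r : ℝ} (hsol : SolvesTOV S p)
    (hScont : ContinuousOn S (Set.Ici 0)) (hSnonneg : ∀ q : ℝ, 0 ≤ q → 0 ≤ S q)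
    (hB : ∀ r, 0 < r → 2 * tovMass S p r / r ≤ 8 / 9) (hp0 : p 0 = E ^ 4 / 3) (hC₀ : 0 ≤ C₀)
    (hS : ∀ q : ℝ, 0 ≤ q → |S q - 3 * q| ≤ C₀ * √q) (hE3 : 3 ≤ E) (hκ1 : 1 ≤ κ)
    (hCκ : 6000 * C₀ * κ ≤ E) (hN : 0 < N) (hN100 : (100 : ℝ) ^ 50 = N) (hNE : 7 * N * κ ≤ E)
    (hc : c = Real.exp (-(14 * ((20000 : ℝ) + 1) / 3) - 1) / 14)
    (hr1 : κ ^ (1 / 100 : ℝ) * (E ^ 2)⁻¹ ≤ r) (hr2 : r ≤ κ ^ (1 / 50 : ℝ) * (E ^ 2)⁻¹) :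
    E ^ 2 ≤ p r ∧ 4 * Real.pi * r ^ 2 * p r ≤ 2 / 3 ∧
      bkzEnergy (4 * Real.pi * r ^ 2 * p r) (1 - 2 * tovMass S p r / r) ≤
        60 * (C₀ / E) / c + κ ^ (-(c / 100)) * 20000 := by
  have hE0 : 0 < E := by linarith
  have hκ0 : 0 < κ := by linarith
  have hc0 : 0 < c := by rw [hc]; positivity
  have hCE : C₀ ≤ E := by nlinarith
  have hη : C₀ / E ≤ 1 := (div_le_one hE0).2 hCE
  have hη0 : 0 ≤ C₀ / E := by positivity
  have hSL := nearly_radiative hC₀ hE0 hS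
  have hp0L : E ^ 2 ≤ p 0 := by
    rw [hp0]
    nlinarith [mul_nonneg (sq_nonneg E) (by nlinarith : 0 ≤ E ^ 2 - 3)]
  have hS4 : ∀ q, 0 ≤ q → q ≤ p 0 → S q ≤ 4 * p 0 := by
    intro q hq hqp
    have h1 := le_of_abs_le (hS q hq)
    have h2 : C₀ * √q ≤ C₀ * √(p 0) := by gcongr
    have h3 : E ≤ √(p 0) := Real.le_sqrt_of_sq_le hp0L
    nlinarith [Real.mul_self_sqrt (hsol.2.1 0 le_rfl)]
  have hv1 : ∀ s, 0 < s → 1 - 2 * tovMass S p s / s ≤ 1 := fun s hs => by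
    have := hsol.tovMass_nonneg hSnonneg hs.le
    have : 0 ≤ 2 * tovMass S p s / s := by positivity
    linarith
  -- the inner radius `a` and the outer radius `b`
  obtain ⟨a, ha⟩ : ∃ a, a = (100 * E ^ 2)⁻¹ := ⟨_, rfl⟩
  obtain ⟨b, hb⟩ : ∃ b, b = κ ^ (1 / 50 : ℝ) * (E ^ 2)⁻¹ := ⟨_, rfl⟩
  have ha0 : 0 < a := by rw [ha]; positivity
  have hκα : 1 ≤ κ ^ (1 / 100 : ℝ) := Real.one_le_rpow hκ1 (by norm_num)
  have har : a ≤ r := by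
    refine le_trans ?_ hr1
    rw [ha, mul_inv]
    gcongr
    linarith [show (100 : ℝ)⁻¹ ≤ 1 by norm_num]
  have hr0 : 0 < r := ha0.trans_le har
  have hrb : r ≤ b := hb ▸ hr2
  have hpa : E ^ 4 / 6 ≤ p a := by
    refine le_trans ?_ (hsol.center_lower_bound hScont hSnonneg hB hS4 ha0.le)
    have : 210 * Real.pi * p 0 ^ 2 * a ^ 2 = 210 * Real.pi * E ^ 4 / 90000 := by
      rw [hp0, ha]; field_simp; norm_num
    rw [this, hp0]
    nlinarith [Real.pi_lt_four, pow_pos hE0 4]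
  have hbL : E ^ 2 ≤ p b := by
    refine hsol.level_le hScont hSnonneg hB hη hSL ha0 (har.trans hrb) ?_
    have hb50 : b ^ 50 = κ * ((E ^ 2)⁻¹) ^ 50 := by
      rw [hb, mul_pow, ← Real.rpow_natCast, ← Real.rpow_mul hκ0.le]; norm_num
    have ha50 : a ^ 50 = N⁻¹ * ((E ^ 2)⁻¹) ^ 50 := by
      rw [ha, mul_inv, mul_pow, inv_pow, hN100]
    rw [hb50, ha50]
    exact level_gap hN (by positivity) hκ0 (by linarith) hNE hpa
  have hanti := hsol.antitoneOn hSnonneg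
  have hLs : ∀ s, 0 < s → s ≤ b → E ^ 2 ≤ p s := fun s hs hsb =>
    hbL.trans (hanti hs.le (hs.le.trans hsb) hsb)
  have hule : ∀ s, 0 < s → s ≤ b → 4 * Real.pi * s ^ 2 * p s ≤ 2 / 3 := fun s hs hsb =>
    hsol.pressure_le hScont hSnonneg hB hη hSL hs (hLs s hs hsb)
  have hstart : bkzEnergy (4 * Real.pi * a ^ 2 * p a) (1 - 2 * tovMass S p a / a)
      ≤ 20000 := by
    refine bkzEnergy_start_le ?_ (hule a ha0 (har.trans hrb)) (by linarith [hB a ha0])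
      (hv1 a ha0)
    have : 4 * 3 * a ^ 2 * (E ^ 4 / 6) = 1 / 5000 := by
      rw [ha]; field_simp; norm_num
    rw [← this]
    gcongr
    exact Real.pi_gt_three.le
  have hlog : 60 * (C₀ / E) * Real.log (b / a) ≤ 1 := by
    have h1 : b / a = 100 * κ ^ (1 / 50 : ℝ) := by
      rw [hb, ha]; field_simp
    have h2 : κ ^ (1 / 50 : ℝ) ≤ κ := by
      simpa using Real.rpow_le_rpow_of_exponent_le hκ1 (by norm_num : (1 / 50 : ℝ) ≤ 1)
    have h3 : Real.log (b / a) ≤ 100 * κ := by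
      have : 0 < b / a := by rw [h1]; positivity
      linarith [Real.log_le_sub_one_of_pos this]
    calc _ ≤ 60 * (C₀ / E) * (100 * κ) := by gcongr
      _ = 6000 * C₀ * κ / E := by ring
      _ ≤ 1 := (div_le_one hE0).2 hCκ
  have hratio : (a / r) ^ c ≤ κ ^ (-(c / 100)) := by
    have h1 : a / r ≤ κ ^ (-(1 / 100) : ℝ) := by
      rw [Real.rpow_neg hκ0.le, div_le_iff₀ hr0, ← div_eq_inv_mul, le_div_iff₀ (by positivity)]
      refine le_trans ?_ hr1
      rw [mul_comm, ha]
      gcongr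
      nlinarith [pow_pos hE0 2]
    calc _ ≤ (κ ^ (-(1 / 100) : ℝ)) ^ c := by gcongr
      _ = _ := by rw [← Real.rpow_mul hκ0.le]; ring_nf
  refine ⟨hLs r hr0 hrb, hule r hr0 hrb, ?_⟩
  refine (hsol.bkzEnergy_decay hScont hSnonneg hB (by positivity) hη0 hη hSL ha0 hbL
    (by norm_num) hstart hlog (r := r) ⟨har, hrb⟩).trans ?_
  rw [← hc]
  gcongr

/-- In the ultrarelativistic limit `κ → ∞`, on the annulus
`[κ^{α₁} e^{−2κ}, κ^{α₂} e^{−2κ}]` the steady states with central pressure `e^{4κ}/3` are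
captured by the BKZ solution: `r²ρ ≈ 3/(56π)`, `r²p ≈ 1/(56π)`, `m/r ≈ 3/14`, `e^{2λ} ≈ 7/4`,
`2rμ′ ≈ 1`, `r|λ′| ≈ 0`, all with error `O(κ^{−δ})`. -/
theorem stmt10
    (S : ℝ → ℝ) (C₀ : ℝ) (hC₀ : 0 < C₀)
    (hScont : ContinuousOn S (Set.Ici 0)) (hS0 : S 0 = 0)
    (hSnonneg : ∀ q : ℝ, 0 ≤ q → 0 ≤ S q)
    (hS : ∀ q : ℝ, 0 ≤ q → |S q - 3 * q| ≤ C₀ * Real.sqrt q)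
    (p : ℝ → ℝ → ℝ)
    (hp : ∀ κ : ℝ, 0 < κ → SolvesTOV S (p κ) ∧ p κ 0 = Real.exp (4 * κ) / 3 ∧
      ∀ r : ℝ, 0 < r → 2 * tovMass S (p κ) r / r ≤ 8 / 9)
    (pstar : ℝ → ℝ)
    (hpstar : SolvesTOV (fun q => 3 * q) pstar)
    (hpstarpos : ∀ r : ℝ, 0 ≤ r → 0 < pstar r)
    (hpstar0 : pstar 0 = 1 / 3)
    (hpstarBuch : ∀ r : ℝ, 0 < r → 2 * tovMass (fun q => 3 * q) pstar r / r ≤ 8 / 9) :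
    ∃ α₁ α₂ : ℝ, 0 < α₁ ∧ α₁ < α₂ ∧ α₂ < 1 / 4 ∧
      ∃ κ₀ : ℝ, 0 < κ₀ ∧ ∃ δ : ℝ, 0 < δ ∧ ∃ C : ℝ, 0 < C ∧
        ∀ κ : ℝ, κ₀ ≤ κ → ∀ r : ℝ,
          κ ^ α₁ * Real.exp (-2 * κ) ≤ r → r ≤ κ ^ α₂ * Real.exp (-2 * κ) →
          |r ^ 2 * S (p κ r) - 3 / (56 * Real.pi)| ≤ C * κ ^ (-δ) ∧
          |r ^ 2 * p κ r - 1 / (56 * Real.pi)| ≤ C * κ ^ (-δ) ∧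
          |tovMass S (p κ) r / r - 3 / 14| ≤ C * κ ^ (-δ) ∧
          |(1 - 2 * tovMass S (p κ) r / r)⁻¹ - 7 / 4| ≤ C * κ ^ (-δ) ∧
          |2 * r * ((1 - 2 * tovMass S (p κ) r / r)⁻¹ *
              (tovMass S (p κ) r / r ^ 2 + 4 * Real.pi * r * p κ r)) - 1| ≤ C * κ ^ (-δ) ∧
          r * |(1 - 2 * tovMass S (p κ) r / r)⁻¹ *
              (4 * Real.pi * r * S (p κ r) - tovMass S (p κ) r / r ^ 2)| ≤ C * κ ^ (-δ) := by
  obtain ⟨c, hc⟩ : ∃ c, c = Real.exp (-(14 * ((20000 : ℝ) + 1) / 3) - 1) / 14 := ⟨_, rfl⟩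
  have hc0 : 0 < c := by rw [hc]; positivity
  have hc1 : c ≤ 1 := by
    have : Real.exp (-(14 * ((20000 : ℝ) + 1) / 3) - 1) ≤ 1 :=
      Real.exp_le_one_iff.2 (by norm_num)
    rw [hc]; linarith
  obtain ⟨N, hN⟩ : ∃ N, N = (100 : ℝ) ^ 50 := ⟨_, rfl⟩
  have hN1 : 1 ≤ N := by rw [hN]; norm_num
  obtain ⟨K, hK⟩ : ∃ K, K = 6000 * C₀ + 7 * N := ⟨_, rfl⟩
  have hK1 : 3 ≤ K := by linarith
  obtain ⟨A, hA⟩ : ∃ A, A = √(10 * (60 * C₀ / c + 20000)) := ⟨_, rfl⟩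
  have hA0 : 0 ≤ A := hA ▸ Real.sqrt_nonneg _
  have hA2 : A ^ 2 = 10 * (60 * C₀ / c + 20000) := hA ▸ Real.sq_sqrt (by positivity)
  refine ⟨1 / 100, 1 / 50, by norm_num, by norm_num, by norm_num, 2 * K, by linarith, c / 200,
    by positivity, 100 * (A + C₀), by positivity, fun κ hκ r hr1 hr2 => ?_⟩
  have hκ1 : 1 ≤ κ := by linarith
  have hκ0 : 0 < κ := by linarith
  obtain ⟨hsol, hp0, hB⟩ := hp κ hκ0
  obtain ⟨E, hE⟩ : ∃ E, E = Real.exp κ := ⟨_, rfl⟩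
  have hE0 : 0 < E := hE ▸ Real.exp_pos κ
  have hKE : K * κ ≤ E := by
    have := Real.quadratic_le_exp_of_nonneg hκ0.le
    rw [hE]; nlinarith
  have hE4 : Real.exp (4 * κ) = E ^ 4 := by rw [hE, ← Real.exp_nat_mul]; norm_num
  have hEm2 : Real.exp (-2 * κ) = (E ^ 2)⁻¹ := by
    rw [hE, ← Real.exp_nat_mul, ← Real.exp_neg]; norm_num
  rw [hE4] at hp0
  rw [hEm2] at hr1 hr2
  have hκK : K ≤ K * κ := le_mul_of_one_le_right (by linarith) hκ1
  have hE3 : 3 ≤ E := by linarith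
  have hCκ : 6000 * C₀ * κ ≤ E := by
    refine le_trans (mul_le_mul_of_nonneg_right ?_ hκ0.le) hKE
    rw [hK]
    exact le_add_of_nonneg_right (by positivity)
  have hNE : 7 * N * κ ≤ E := by
    refine le_trans (mul_le_mul_of_nonneg_right ?_ hκ0.le) hKE
    rw [hK]
    exact le_add_of_nonneg_left (by positivity)
  have hr0 : 0 < r := lt_of_lt_of_le (by positivity) hr1
  obtain ⟨hLr, hur, hW⟩ := hsol.annulus_bounds hScont hSnonneg hB hp0 hC₀.le hS hE3 hκ1 hCκ
    (by linarith) hN.symm hNE hc hr1 hr2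
  have hEκ : C₀ / E ≤ C₀ * κ ^ (-1 : ℝ) := by
    rw [Real.rpow_neg_one, div_eq_mul_inv]
    gcongr
    nlinarith
  have hηκ : C₀ / E ≤ C₀ * κ ^ (-(c / 100)) := by
    refine hEκ.trans ?_
    gcongr
    linarith
  have hηδ : C₀ / E ≤ C₀ * κ ^ (-(c / 200)) := by
    refine hEκ.trans ?_
    gcongr
    linarith
  have hsq : (κ ^ (-(c / 200))) ^ 2 = κ ^ (-(c / 100)) := by
    rw [← Real.rpow_mul_natCast hκ0.le]; ring_nf
  have hWκ : 10 * bkzEnergy (4 * Real.pi * r ^ 2 * p κ r) (1 - 2 * tovMass S (p κ) r / r) ≤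
      (A * κ ^ (-(c / 200))) ^ 2 := by
    rw [mul_pow, hsq, hA2]
    have h1 : 60 * (C₀ / E) / c ≤ 60 * (C₀ * κ ^ (-(c / 100))) / c := by gcongr
    have h2 : 60 * (C₀ * κ ^ (-(c / 100))) / c = 60 * C₀ / c * κ ^ (-(c / 100)) := by ring
    linarith
  have hpr : 0 < p κ r := lt_of_lt_of_le (by positivity) hLr
  have hvr : 1 / 9 ≤ 1 - 2 * tovMass S (p κ) r / r := by linarith [hB r hr0]
  have hv1 : 1 - 2 * tovMass S (p κ) r / r ≤ 1 := by
    have := hsol.tovMass_nonneg hSnonneg hr0.le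
    have : 0 ≤ 2 * tovMass S (p κ) r / r := by positivity
    linarith
  have hclose := sq_add_sq_le_bkzEnergy (by positivity) hur
    (by linarith : 0 < 1 - 2 * tovMass S (p κ) r / r) hv1
  have hAX : 0 ≤ A * κ ^ (-(c / 200)) := by positivity
  have hCX : 0 ≤ C₀ * κ ^ (-(c / 200)) := by positivity
  rw [mul_assoc 100]
  refine bkz_estimates hr0 hur hvr
    (nearly_radiative hC₀.le hE0 hS _ hpr.le hLr) (by linarith) (by positivity) ?_ ?_
  · refine (abs_le_of_sq_le_sq (le_trans ?_ (hclose.trans hWκ)) hAX).trans (by linarith)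
    exact le_add_of_nonneg_right (sq_nonneg _)
  · refine (abs_le_of_sq_le_sq (le_trans ?_ (hclose.trans hWκ)) hAX).trans (by linarith)
    exact le_add_of_nonneg_left (sq_nonneg _)

end
end

section
/- Let V : ℝ³ → [0,∞) be continuous with compact support. Then the negative Morse index of the Schrödinger-type quadratic form Q(φ) := ∫_{ℝ³} |∇φ(x)|² dx − ∫_{ℝ³} V(x) φ(x)² dx is finite: there exists N ∈ ℕ such that every finite-dimensional subspace W of the space of smooth compactly supported functions C_c^∞(ℝ³) with the property that Q(φ) < 0 for every φ ∈ W ∖ {0} satisfies dim W ≤ N. -/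
open MeasureTheory

open scoped ENNReal

/-- Cauchy–Schwarz against the constant function `1`. -/
lemma lintegral_sq_le_measure_univ_mul {α : Type*} [MeasurableSpace α] (ν : Measure α)
    {f : α → ℝ≥0∞} (hf : AEMeasurable f ν) :
    (∫⁻ x, f x ∂ν) ^ 2 ≤ ν Set.univ * ∫⁻ x, f x ^ 2 ∂ν := by
  have h := ENNReal.lintegral_mul_le_Lp_mul_Lq ν Real.HolderConjugate.two_two
    (aemeasurable_const (b := (1 : ℝ≥0∞))) hf
  simp only [Pi.mul_apply, one_mul, ENNReal.rpow_two, one_pow, lintegral_const] at h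
  calc (∫⁻ x, f x ∂ν) ^ 2
      ≤ (ν Set.univ ^ (1 / 2 : ℝ) * (∫⁻ x, f x ^ 2 ∂ν) ^ (1 / 2 : ℝ)) ^ 2 := by gcongr
    _ = ν Set.univ * ∫⁻ x, f x ^ 2 ∂ν := by
        rw [mul_pow, ← ENNReal.rpow_two, ← ENNReal.rpow_two, ← ENNReal.rpow_mul,
          ← ENNReal.rpow_mul]
        norm_num

lemma measure_mul_enorm_sq_le_of_mean_zero {E : Type*} [TopologicalSpace E]
    [MeasurableSpace E] [OpensMeasurableSpace E] (μ : Measure E) {φ : E → ℝ} (hφc : Continuous φ) {C : Set E}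
    (h0 : μ C ≠ 0) (hfin : μ C ≠ ∞) (hint : IntegrableOn φ C μ)
    (hmean : ∫ x in C, φ x ∂μ = 0) (y : E) :
    μ C * ‖φ y‖ₑ ^ 2 ≤ ∫⁻ x in C, ‖φ x - φ y‖ₑ ^ 2 ∂μ := by
  have : IsFiniteMeasure (μ.restrict C) := ⟨by simpa using hfin.lt_top⟩
  have h1 : ∫ x in C, (φ x - φ y) ∂μ = -(μ.real C * φ y) := by
    rw [integral_sub hint (integrable_const _), hmean]
    simp
  have h2 : μ C * ‖φ y‖ₑ ≤ ∫⁻ x in C, ‖φ x - φ y‖ₑ ∂μ := by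
    refine le_trans (le_of_eq ?_) (enorm_integral_le_lintegral_enorm _)
    rw [h1, enorm_neg, enorm_mul, Real.enorm_of_nonneg measureReal_nonneg, Measure.real,
      ENNReal.ofReal_toReal hfin]
  have h3 := lintegral_sq_le_measure_univ_mul (μ.restrict C)
    (f := fun x => ‖φ x - φ y‖ₑ)
    (hφc.sub continuous_const).enorm.measurable.aemeasurable
  rw [Measure.restrict_apply_univ] at h3
  have h4 := (pow_le_pow_left' h2 2).trans h3
  rw [mul_pow, sq (μ C), mul_assoc] at h4
  exact (ENNReal.mul_le_mul_iff_right h0 hfin).1 h4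

section Poincare

variable {E : Type*} [NormedAddCommGroup E] [NormedSpace ℝ E]

/-- The increment of a `C¹` function is controlled in mean square along the segment. -/
lemma enorm_sub_sq_le_lintegral_segment {φ : E → ℝ} (hφ : ContDiff ℝ 1 φ) (x y : E) :
    ‖φ x - φ y‖ₑ ^ 2 ≤
      ‖x - y‖ₑ ^ 2 * ∫⁻ t in Set.Ioc (0 : ℝ) 1, ‖fderiv ℝ φ (y + t • (x - y))‖ₑ ^ 2 := by
  have hc : Continuous fun t : ℝ => fderiv ℝ φ (y + t • (x - y)) :=
    (hφ.continuous_fderiv one_ne_zero).comp (by fun_prop)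
  have hd : ∀ t : ℝ, HasDerivAt (fun t : ℝ => φ (y + t • (x - y)))
      (fderiv ℝ φ (y + t • (x - y)) (x - y)) t := fun t => by
    have h1 : HasDerivAt (fun t : ℝ => y + t • (x - y)) (x - y) t := by
      simpa using ((hasDerivAt_id t).smul_const (x - y)).const_add y
    exact ((hφ.differentiable one_ne_zero _).hasFDerivAt).comp_hasDerivAt t h1
  have hftc := intervalIntegral.integral_eq_sub_of_hasDerivAt (a := 0) (b := 1)
    (fun t _ => hd t) ((hc.clm_apply continuous_const).intervalIntegrable _ _)
  simp only [one_smul, zero_smul, add_zero, add_sub_cancel] at hftc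
  rw [← hftc, intervalIntegral.integral_of_le zero_le_one]
  have h2 : ‖∫ t in Set.Ioc (0 : ℝ) 1, fderiv ℝ φ (y + t • (x - y)) (x - y)‖ₑ ≤
      (∫⁻ t in Set.Ioc (0 : ℝ) 1, ‖fderiv ℝ φ (y + t • (x - y))‖ₑ) * ‖x - y‖ₑ := by
    refine (enorm_integral_le_lintegral_enorm _).trans ?_
    rw [← lintegral_mul_const _ hc.enorm.measurable]
    exact lintegral_mono fun t => ContinuousLinearMap.le_opENorm _ _
  have h3 := lintegral_sq_le_measure_univ_mul (volume.restrict (Set.Ioc (0 : ℝ) 1))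
    hc.enorm.measurable.aemeasurable
  simp only [Measure.restrict_apply_univ, Real.volume_Ioc, sub_zero, ENNReal.ofReal_one,
    one_mul] at h3
  calc _ ≤ _ := pow_le_pow_left' h2 2
    _ = ‖x - y‖ₑ ^ 2 * (∫⁻ t in Set.Ioc (0 : ℝ) 1, ‖fderiv ℝ φ (y + t • (x - y))‖ₑ) ^ 2 := by
        rw [mul_pow, mul_comm]
    _ ≤ _ := by gcongr

variable [FiniteDimensional ℝ E] [MeasurableSpace E] [BorelSpace E]
  (μ : Measure E) [μ.IsAddHaarMeasure]

lemma lintegral_comp_add_smul_le {g : E → ℝ≥0∞} (hg : Measurable g) (a : E) {t : ℝ}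
    (ht : 1 / 2 ≤ t) :
    ∫⁻ x, g (a + t • x) ∂μ ≤ 2 ^ Module.finrank ℝ E * ∫⁻ x, g x ∂μ := by
  have ht0 : 0 < t := by linarith
  have hm : Measurable fun z => g (a + z) := hg.comp (measurable_const_add a)
  have h1 : ∫⁻ x, g (a + t • x) ∂μ = ∫⁻ z, g (a + z) ∂(μ.map (t • ·)) :=
    (lintegral_map hm (measurable_const_smul t)).symm
  rw [h1, Measure.map_addHaar_smul μ ht0.ne', lintegral_smul_measure,
    lintegral_add_left_eq_self, smul_eq_mul]
  gcongr
  rw [abs_of_pos (by positivity), ← inv_pow]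
  calc ENNReal.ofReal (t⁻¹ ^ Module.finrank ℝ E) ≤ ENNReal.ofReal (2 ^ Module.finrank ℝ E) := by
        gcongr
        rw [inv_le_comm₀ ht0 two_pos]
        linarith
    _ = 2 ^ Module.finrank ℝ E := by
        rw [ENNReal.ofReal_pow zero_le_two, ENNReal.ofReal_ofNat]

lemma lintegral_lintegral_comp_segment_le {g : E → ℝ≥0∞} (hg : Measurable g) {C : Set E}
    (hC : MeasurableSet C) (hconv : Convex ℝ C) {t : ℝ} (ht : t ∈ Set.Icc (0 : ℝ) 1) :
    ∫⁻ y in C, ∫⁻ x in C, g (y + t • (x - y)) ∂μ ∂μ ≤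
      μ C * (2 ^ Module.finrank ℝ E * ∫⁻ x in C, g x ∂μ) := by
  have hG : Measurable (C.indicator g) := hg.indicator hC
  have hmem : ∀ y ∈ C, ∀ x ∈ C, g (y + t • (x - y)) = C.indicator g (y + t • (x - y)) :=
    fun y hy x hx => (Set.indicator_of_mem (hconv.add_smul_sub_mem hy hx ht) g).symm
  rw [← lintegral_indicator hC g]
  rcases le_total (1 / 2) t with h | h
  · calc _ ≤ ∫⁻ _ in C, 2 ^ Module.finrank ℝ E * ∫⁻ x, C.indicator g x ∂μ ∂μ := by
          refine setLIntegral_mono' hC fun y hy => ?_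
          rw [setLIntegral_congr_fun hC (hmem y hy)]
          refine (setLIntegral_le_lintegral _ _).trans ?_
          refine le_trans (le_of_eq ?_)
            (lintegral_comp_add_smul_le μ hG (y - t • y) h)
          refine lintegral_congr fun x => ?_
          congr 1
          module
      _ = _ := by rw [setLIntegral_const, mul_comm]
  · have hmeas : Measurable (Function.uncurry fun y x : E => g (y + t • (x - y))) := by
      refine hg.comp (Continuous.measurable ?_)
      fun_prop
    rw [lintegral_lintegral_swap hmeas.aemeasurable]
    calc _ ≤ ∫⁻ _ in C, 2 ^ Module.finrank ℝ E * ∫⁻ x, C.indicator g x ∂μ ∂μ := by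
          refine setLIntegral_mono' hC fun x hx => ?_
          rw [setLIntegral_congr_fun hC (fun y hy => hmem y hy x hx)]
          refine (setLIntegral_le_lintegral _ _).trans ?_
          refine le_trans (le_of_eq ?_)
            (lintegral_comp_add_smul_le μ hG (t • x) (t := 1 - t) (by linarith))
          refine lintegral_congr fun y => ?_
          congr 1
          module
      _ = _ := by rw [setLIntegral_const, mul_comm]

lemma lintegral_lintegral_lintegral_segment_swap {g : E → ℝ≥0∞} (hg : Measurable g)
    (ν : Measure E) [SFinite ν] (τ : Measure ℝ) [SFinite τ] :
    ∫⁻ y, ∫⁻ x, ∫⁻ t, g (y + t • (x - y)) ∂τ ∂ν ∂ν =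
      ∫⁻ t, ∫⁻ y, ∫⁻ x, g (y + t • (x - y)) ∂ν ∂ν ∂τ := by
  have hm : Measurable fun q : (E × ℝ) × E => g (q.1.1 + q.1.2 • (q.2 - q.1.1)) := by
    refine hg.comp (Continuous.measurable ?_)
    fun_prop
  have hm1 : ∀ y, Measurable fun q : E × ℝ => g (y + q.2 • (q.1 - y)) := fun y => by
    refine hg.comp (Continuous.measurable ?_)
    fun_prop
  have hm2 : Measurable fun p : E × ℝ => ∫⁻ x, g (p.1 + p.2 • (x - p.1)) ∂ν :=
    hm.lintegral_prod_right'
  calc _ = ∫⁻ y, ∫⁻ t, ∫⁻ x, g (y + t • (x - y)) ∂ν ∂τ ∂ν :=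
        lintegral_congr fun y => lintegral_lintegral_swap (hm1 y).aemeasurable
    _ = _ := lintegral_lintegral_swap hm2.aemeasurable

lemma lintegral_lintegral_enorm_sub_sq_le {φ : E → ℝ} (hφ : ContDiff ℝ 1 φ) {C : Set E}
    (hC : MeasurableSet C) (hconv : Convex ℝ C)
    {d : ℝ≥0∞} (hd : ∀ x ∈ C, ∀ y ∈ C, ‖x - y‖ₑ ≤ d) (hdfin : d ≠ ∞) :
    ∫⁻ y in C, ∫⁻ x in C, ‖φ x - φ y‖ₑ ^ 2 ∂μ ∂μ ≤
      d ^ 2 * (μ C * (2 ^ Module.finrank ℝ E * ∫⁻ x in C, ‖fderiv ℝ φ x‖ₑ ^ 2 ∂μ)) := by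
  have hg : Measurable fun x => ‖fderiv ℝ φ x‖ₑ ^ 2 :=
    (hφ.continuous_fderiv one_ne_zero).enorm.measurable.pow_const 2
  have hd2 : d ^ 2 ≠ ∞ := ENNReal.pow_ne_top hdfin
  set g : E → ℝ≥0∞ := fun x => ‖fderiv ℝ φ x‖ₑ ^ 2 with hgdef
  calc _ ≤ ∫⁻ y in C, ∫⁻ x in C, d ^ 2 *
          ∫⁻ t in Set.Ioc (0 : ℝ) 1, g (y + t • (x - y)) ∂volume ∂μ ∂μ := by
        refine setLIntegral_mono' hC fun y hy => setLIntegral_mono' hC fun x hx => ?_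
        refine (enorm_sub_sq_le_lintegral_segment hφ x y).trans ?_
        exact mul_le_mul_left (pow_le_pow_left' (hd x hx y hy) 2) _
    _ = d ^ 2 * ∫⁻ y in C, ∫⁻ x in C,
          ∫⁻ t in Set.Ioc (0 : ℝ) 1, g (y + t • (x - y)) ∂volume ∂μ ∂μ := by
        rw [← lintegral_const_mul' _ _ hd2]
        exact lintegral_congr fun y => lintegral_const_mul' _ _ hd2
    _ = d ^ 2 * ∫⁻ t in Set.Ioc (0 : ℝ) 1, ∫⁻ y in C, ∫⁻ x in C,
          g (y + t • (x - y)) ∂μ ∂μ := by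
        rw [lintegral_lintegral_lintegral_segment_swap hg]
    _ ≤ d ^ 2 * ∫⁻ _ in Set.Ioc (0 : ℝ) 1,
          μ C * (2 ^ Module.finrank ℝ E * ∫⁻ x in C, g x ∂μ) := by
        refine mul_le_mul_right (setLIntegral_mono' measurableSet_Ioc fun t ht => ?_) _
        exact lintegral_lintegral_comp_segment_le μ hg hC hconv (Set.Ioc_subset_Icc_self ht)
    _ = _ := by
        rw [lintegral_const, Measure.restrict_apply_univ, Real.volume_Ioc, sub_zero,
          ENNReal.ofReal_one, mul_one]

/-- Poincaré inequality for functions of mean zero on a convex set of small diameter. -/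
lemma lintegral_enorm_sq_le_of_convex {φ : E → ℝ} (hφ : ContDiff ℝ 1 φ) {C : Set E}
    (hC : MeasurableSet C) (hconv : Convex ℝ C) (hfin : μ C ≠ ∞) (hint : IntegrableOn φ C μ)
    (hmean : ∫ x in C, φ x ∂μ = 0)
    {d : ℝ≥0∞} (hd : ∀ x ∈ C, ∀ y ∈ C, ‖x - y‖ₑ ≤ d) (hdfin : d ≠ ∞) :
    ∫⁻ x in C, ‖φ x‖ₑ ^ 2 ∂μ ≤
      d ^ 2 * (2 ^ Module.finrank ℝ E * ∫⁻ x in C, ‖fderiv ℝ φ x‖ₑ ^ 2 ∂μ) := by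
  rcases eq_or_ne (μ C) 0 with h0 | h0
  · simp [Measure.restrict_eq_zero.2 h0]
  refine (ENNReal.mul_le_mul_iff_right h0 hfin).1 ?_
  calc μ C * ∫⁻ y in C, ‖φ y‖ₑ ^ 2 ∂μ
      = ∫⁻ y in C, μ C * ‖φ y‖ₑ ^ 2 ∂μ := (lintegral_const_mul' _ _ hfin).symm
    _ ≤ ∫⁻ y in C, ∫⁻ x in C, ‖φ x - φ y‖ₑ ^ 2 ∂μ ∂μ := lintegral_mono fun y =>
        measure_mul_enorm_sq_le_of_mean_zero μ hφ.continuous h0 hfin hint hmean y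
    _ ≤ _ := lintegral_lintegral_enorm_sub_sq_le μ hφ hC hconv hd hdfin
    _ = _ := mul_left_comm _ _ _

end Poincare

/-- The half-open cube of side `h` with integer index `k`. -/
def gridCell {n : ℕ} (h : ℝ) (k : Fin n → ℤ) : Set (EuclideanSpace ℝ (Fin n)) :=
  {x | ∀ i, x i ∈ Set.Ico (k i * h) ((k i + 1) * h)}

section gridCell

variable {n : ℕ} {h : ℝ}

lemma measurableSet_gridCell (k : Fin n → ℤ) : MeasurableSet (gridCell h k) := by
  refine MeasurableSet.congr (MeasurableSet.iInter fun i =>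
    measurableSet_Ico.preimage (EuclideanSpace.proj (𝕜 := ℝ) i).continuous.measurable)
    (s := ⋂ i, (EuclideanSpace.proj (𝕜 := ℝ) i) ⁻¹' Set.Ico (k i * h) ((k i + 1) * h)) ?_
  ext x
  simp [gridCell]

lemma convex_gridCell (k : Fin n → ℤ) : Convex ℝ (gridCell h k) := by
  intro x hx y hy a b ha hb hab i
  exact convex_Ico _ _ (hx i) (hy i) ha hb hab

lemma mem_gridCell_iff (hh : 0 < h) {k : Fin n → ℤ} {x : EuclideanSpace ℝ (Fin n)} :
    x ∈ gridCell h k ↔ (fun i => ⌊x i / h⌋) = k := by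
  simp only [gridCell, Set.mem_ofPred_eq, Set.mem_Ico, funext_iff, Int.floor_eq_iff,
    le_div_iff₀ hh, div_lt_iff₀ hh]

lemma norm_sub_le_of_mem_gridCell {k : Fin n → ℤ}
    {x y : EuclideanSpace ℝ (Fin n)} (hx : x ∈ gridCell h k) (hy : y ∈ gridCell h k) :
    ‖x - y‖ ≤ √(n * h ^ 2) := by
  rw [EuclideanSpace.norm_eq]
  gcongr
  calc ∑ i, ‖(x - y) i‖ ^ 2 ≤ ∑ _i : Fin n, h ^ 2 := by
        refine Finset.sum_le_sum fun i _ => ?_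
        obtain ⟨h1, h2⟩ := hx i
        obtain ⟨h3, h4⟩ := hy i
        rw [Real.norm_eq_abs, sq_abs, PiLp.sub_apply]
        apply sq_le_sq' <;> nlinarith
    _ = n * h ^ 2 := by simp

lemma isBounded_gridCell (k : Fin n → ℤ) : Bornology.IsBounded (gridCell h k) :=
  Metric.isBounded_iff.2 ⟨√(n * h ^ 2), fun x hx y hy => by
    rw [dist_eq_norm]; exact norm_sub_le_of_mem_gridCell hx hy⟩

lemma exists_finset_gridCell_cover (hh : 0 < h) {K : Set (EuclideanSpace ℝ (Fin n))}
    (hK : Bornology.IsBounded K) :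
    ∃ S : Finset (Fin n → ℤ), K ⊆ ⋃ k ∈ S, gridCell h k := by
  obtain ⟨R, hR⟩ := hK.exists_norm_le
  refine ⟨(Set.finite_Icc (fun _ => ⌊-R / h⌋) (fun _ => ⌊R / h⌋)).toFinset, fun x hx => ?_⟩
  simp only [Set.Finite.mem_toFinset, Set.mem_iUnion, exists_prop]
  have hb : ∀ i, |x i| ≤ R := fun i => (PiLp.norm_apply_le x i).trans (hR x hx)
  refine ⟨fun i => ⌊x i / h⌋, ⟨fun i => ?_, fun i => ?_⟩, (mem_gridCell_iff hh).2 rfl⟩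
  · have := (abs_le.1 (hb i)).1
    dsimp only
    gcongr
  · have := (abs_le.1 (hb i)).2
    dsimp only
    gcongr

end gridCell

/-- If `φ` has mean zero on sufficiently small grid cells covering the support of `V`, then the
potential energy of `φ` is at most its kinetic energy. -/
lemma integral_mul_sq_le_integral_gradient_sq {n : ℕ} {h M : ℝ}
    {V φ : EuclideanSpace ℝ (Fin n) → ℝ} (hVcont : Continuous V) (hV : ∀ x, 0 ≤ V x)
    (hVM : ∀ x, V x ≤ M) (hh : 0 < h) (hhM : M * (n * h ^ 2 * 2 ^ n) ≤ 1)
    {S : Finset (Fin n → ℤ)} (hS : tsupport V ⊆ ⋃ k ∈ S, gridCell h k)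
    (hφ : ContDiff ℝ 1 φ) (hφs : HasCompactSupport φ)
    (hmean : ∀ k ∈ S, ∫ x in gridCell h k, φ x = 0) :
    ∫ x, V x * φ x ^ 2 ≤ ∫ x, ‖gradient φ x‖ ^ 2 := by
  have hM : 0 ≤ M := (hV 0).trans (hVM 0)
  have hφc := hφ.continuous
  have hfc := hφ.continuous_fderiv one_ne_zero
  have hgrad : ∀ x, ‖gradient φ x‖ = ‖fderiv ℝ φ x‖ := fun x => by
    simp [gradient]
  have hfs : HasCompactSupport fun x => ‖fderiv ℝ φ x‖ := (hφs.fderiv (𝕜 := ℝ)).norm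
  have hfc2 : Continuous fun x => ‖fderiv ℝ φ x‖ ^ 2 := hfc.norm.pow 2
  have hfs2 : HasCompactSupport fun x => ‖fderiv ℝ φ x‖ ^ 2 := by
    refine hfs.mono fun x hx => ?_
    rw [Function.mem_support] at hx ⊢
    exact fun h0 => hx (by rw [h0, zero_pow two_ne_zero])
  have hfint : Integrable fun x => ‖fderiv ℝ φ x‖ ^ 2 := 
    hfc2.integrable_of_hasCompactSupport hfs2
  have hsq : ∀ x, ENNReal.ofReal (‖fderiv ℝ φ x‖ ^ 2) = ‖fderiv ℝ φ x‖ₑ ^ 2 := fun x => by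
    rw [ENNReal.ofReal_pow (norm_nonneg _), ofReal_norm]
  simp only [hgrad]
  rw [integral_eq_lintegral_of_nonneg_ae
      (Filter.Eventually.of_forall fun x => mul_nonneg (hV x) (sq_nonneg _))
      (by fun_prop),
    integral_eq_lintegral_of_nonneg_ae (Filter.Eventually.of_forall fun x => sq_nonneg _)
      hfint.aestronglyMeasurable]
  refine ENNReal.toReal_mono ?_ ?_
  · exact hfint.lintegral_lt_top.ne
  have hcell : ∀ k ∈ S, ∫⁻ x in gridCell h k, ENNReal.ofReal (V x * φ x ^ 2) ≤
      ∫⁻ x in gridCell h k, ‖fderiv ℝ φ x‖ₑ ^ 2 := fun k hk => by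
    have hP := lintegral_enorm_sq_le_of_convex volume hφ (measurableSet_gridCell k)
      (convex_gridCell k) (isBounded_gridCell k).measure_lt_top.ne
      (hφc.integrable_of_hasCompactSupport hφs).integrableOn (hmean k hk)
      (d := ENNReal.ofReal √(n * h ^ 2)) (fun x hx y hy => by
        rw [← ofReal_norm]
        exact ENNReal.ofReal_le_ofReal (norm_sub_le_of_mem_gridCell hx hy))
      ENNReal.ofReal_ne_top
    rw [finrank_euclideanSpace_fin, ← mul_assoc] at hP
    calc ∫⁻ x in gridCell h k, ENNReal.ofReal (V x * φ x ^ 2)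
        ≤ ∫⁻ x in gridCell h k, ENNReal.ofReal M * ‖φ x‖ₑ ^ 2 := by
          refine lintegral_mono fun x => ?_
          rw [ENNReal.ofReal_mul (hV x), ← sq_abs, ENNReal.ofReal_pow (abs_nonneg _),
            ← Real.enorm_eq_ofReal_abs]
          gcongr
          exact hVM x
      _ = ENNReal.ofReal M * ∫⁻ x in gridCell h k, ‖φ x‖ₑ ^ 2 :=
          lintegral_const_mul _ (by fun_prop)
      _ ≤ ENNReal.ofReal M * (ENNReal.ofReal √(n * h ^ 2) ^ 2 * 2 ^ n *
            ∫⁻ x in gridCell h k, ‖fderiv ℝ φ x‖ₑ ^ 2) := by gcongr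
      _ = ENNReal.ofReal (M * (n * h ^ 2 * 2 ^ n)) *
            ∫⁻ x in gridCell h k, ‖fderiv ℝ φ x‖ₑ ^ 2 := by
          rw [← ENNReal.ofReal_pow (Real.sqrt_nonneg _), Real.sq_sqrt (by positivity),
            ENNReal.ofReal_mul hM, ENNReal.ofReal_mul (by positivity : 0 ≤ n * h ^ 2),
            ENNReal.ofReal_pow zero_le_two, ENNReal.ofReal_ofNat]
          ring
      _ ≤ 1 * ∫⁻ x in gridCell h k, ‖fderiv ℝ φ x‖ₑ ^ 2 := by
          gcongr
          exact ENNReal.ofReal_le_one.2 hhM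
      _ = _ := one_mul _
  have hdisj : Set.PairwiseDisjoint (S : Set (Fin n → ℤ)) (gridCell h) := by
    intro k _ l _ hkl
    refine Set.disjoint_left.2 fun x hx hy => hkl ?_
    rw [← (mem_gridCell_iff hh).1 hx, ← (mem_gridCell_iff hh).1 hy]
  have hmeas : ∀ k ∈ S, MeasurableSet (gridCell h k) := fun k _ => measurableSet_gridCell k
  simp only [hsq]
  calc ∫⁻ x, ENNReal.ofReal (V x * φ x ^ 2)
      = ∫⁻ x in ⋃ k ∈ S, gridCell h k, ENNReal.ofReal (V x * φ x ^ 2) := by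
        refine (setLIntegral_eq_of_support_subset ?_).symm
        intro x hx
        refine hS (subset_tsupport V fun h0 => hx ?_)
        simp [h0]
    _ = ∑ k ∈ S, ∫⁻ x in gridCell h k, ENNReal.ofReal (V x * φ x ^ 2) :=
        lintegral_biUnion_finset hdisj hmeas _
    _ ≤ ∑ k ∈ S, ∫⁻ x in gridCell h k, ‖fderiv ℝ φ x‖ₑ ^ 2 := Finset.sum_le_sum hcell
    _ = ∫⁻ x in ⋃ k ∈ S, gridCell h k, ‖fderiv ℝ φ x‖ₑ ^ 2 :=
        (lintegral_biUnion_finset hdisj hmeas _).symm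
    _ ≤ ∫⁻ x, ‖fderiv ℝ φ x‖ₑ ^ 2 := setLIntegral_le_lintegral _ _

/-- For a continuous, nonnegative, compactly supported potential `V` on `ℝ³`,
the Schrödinger-type quadratic form `Q(φ) = ∫ |∇φ|² − ∫ V φ²` has finite negative Morse index:
there is `N` such that every finite-dimensional subspace of `C_c^∞(ℝ³)` on which `Q` is
negative definite has dimension at most `N`. -/
theorem stmt18 (V : EuclideanSpace ℝ (Fin 3) → ℝ)
    (hVcont : Continuous V) (hVnonneg : ∀ x, 0 ≤ V x)
    (hVsupp : HasCompactSupport V) :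
    ∃ N : ℕ, ∀ W : Submodule ℝ (EuclideanSpace ℝ (Fin 3) → ℝ),
      (∀ φ ∈ W, ContDiff ℝ (⊤ : ℕ∞) φ ∧ HasCompactSupport φ) →
      (∀ φ ∈ W, φ ≠ 0 →
        (∫ x, ‖gradient φ x‖ ^ 2) - (∫ x, V x * φ x ^ 2) < 0) →
      FiniteDimensional ℝ W →
      Module.finrank ℝ W ≤ N := by
  obtain ⟨M, hM⟩ := hVcont.bounded_above_of_compact_support hVsupp
  have hVM : ∀ x, V x ≤ M := fun x => (le_abs_self _).trans (hM x)
  have hM0 : 0 ≤ M := (hVnonneg 0).trans (hVM 0)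
  set h : ℝ := 1 / (5 * (M + 1)) with hdef
  have hh : 0 < h := by positivity
  have hhM : M * (((3 : ℕ) : ℝ) * h ^ 2 * 2 ^ 3) ≤ 1 := by
    have : M * (((3 : ℕ) : ℝ) * h ^ 2 * 2 ^ 3) = 24 * M / (25 * (M + 1) ^ 2) := by
      rw [hdef]; push_cast; field_simp; ring
    rw [this, div_le_one (by positivity)]
    nlinarith
  obtain ⟨S, hS⟩ := exists_finset_gridCell_cover hh hVsupp.isCompact.isBounded
  refine ⟨S.card, fun W hW hneg hfd => ?_⟩
  have hint : ∀ (φ : W) (k : Fin 3 → ℤ),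
      Integrable (φ : EuclideanSpace ℝ (Fin 3) → ℝ) (volume.restrict (gridCell h k)) :=
    fun φ k => ((hW φ φ.2).1.continuous.integrable_of_hasCompactSupport
      (hW φ φ.2).2).integrableOn
  let L : W →ₗ[ℝ] (S → ℝ) :=
    { toFun := fun φ k => ∫ x in gridCell h k, (φ : EuclideanSpace ℝ (Fin 3) → ℝ) x
      map_add' := fun φ ψ => funext fun k => integral_add (hint φ k) (hint ψ k)
      map_smul' := fun c φ => funext fun k => integral_const_mul c _ }
  have hL : Function.Injective L := by
    rw [injective_iff_map_eq_zero]
    intro φ hφ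
    by_contra hne
    refine absurd (hneg φ φ.2 fun h0 => hne (Subtype.ext h0)) (not_lt.2 (sub_nonneg.2 ?_))
    exact integral_mul_sq_le_integral_gradient_sq hVcont hVnonneg hVM hh hhM hS
      ((hW φ φ.2).1.of_le (by exact_mod_cast le_top)) (hW φ φ.2).2
      fun k hk => congrFun hφ ⟨k, hk⟩
  simpa using LinearMap.finrank_le_finrank_of_injective hL
end
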